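/- arXiv:2509.16047 — 3 statements merged into one kernel-verified Lean document; each statement's English description precedes it below -/
import Mathlib

section
/- Let k, n be integers with 1 ≤ k and n > 2k, and define U : ℝⁿ → ℝ by U(x) = (1 + |x|²)^{−(n−2k)/2}. Then on all of ℝⁿ, (−Δ)^k U (x) = [ ∏_{ℓ=1}^{k} (n−2ℓ)(n+2ℓ−2) ] · (1 + |x|²)^{−(n+2k)/2}; equivalently, U is a positive solution of the critical equation (−Δ)^k U = Λ_{n,k} U^{(n+2k)/(n−2k)} with Λ_{n,k} = ∏_{ℓ=1}^{k} (n−2ℓ)(n+2ℓ−2). -/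
/-- The Euclidean Laplacian `Δu = ∑ i, ∂²u/∂xᵢ²` of a function on `ℝⁿ`. -/
noncomputable def lap {n : ℕ} (f : EuclideanSpace ℝ (Fin n) → ℝ)
    (x : EuclideanSpace ℝ (Fin n)) : ℝ :=
  ∑ i, fderiv ℝ (fun y => fderiv ℝ f y (EuclideanSpace.single i 1)) x
    (EuclideanSpace.single i 1)

/-!
Write `E = x · ∇` and `w = c + |x|²`. The commutators `[Δ, w] = 4E + 2n` and `[Δ, E] = 2Δ` give
`Δ^(m+1) (w f) = w Δ^(m+1) f + (m + 1) (4E + 2(n + 2m)) Δ^m f`. The bubble of order `k + 1` is `w`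
times the bubble of order `k`, so by induction on `k` everything reduces to `Δ` and `E` acting on
the single power `w^(-(n+2k)/2)`.
-/

open scoped ContDiff RealInnerProductSpace

section EulerOperator

variable {E F : Type*} [NormedAddCommGroup E] [NormedSpace ℝ E]
  [NormedAddCommGroup F] [NormedSpace ℝ F]

/-- The Euler operator `x · ∇`, the derivative along the radial vector field. -/
noncomputable def eulerOperator (f : E → F) (x : E) : F :=
  fderiv ℝ f x x

theorem contDiff_fderiv_apply_const {m n : ℕ∞ω} {f : E → F} (hf : ContDiff ℝ n f)
    (hmn : m + 1 ≤ n) (v : E) : ContDiff ℝ m (fun x => fderiv ℝ f x v) :=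
  (hf.fderiv_right hmn).clm_apply contDiff_const

theorem differentiable_fderiv_apply_const {f : E → F} (hf : ContDiff ℝ 2 f) (v : E) :
    Differentiable ℝ (fun x => fderiv ℝ f x v) :=
  (contDiff_fderiv_apply_const (m := 1) hf (by norm_num) v).differentiable one_ne_zero

theorem contDiff_eulerOperator {m n : ℕ∞ω} {f : E → F} (hf : ContDiff ℝ n f)
    (hmn : m + 1 ≤ n) : ContDiff ℝ m (eulerOperator f) :=
  (hf.fderiv_right hmn).clm_apply contDiff_id

theorem fderiv_const_mul_apply (a : ℝ) (f : E → ℝ) (x v : E) :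
    fderiv ℝ (fun y => a * f y) x v = a * fderiv ℝ f x v :=
  DFunLike.congr_fun (congrFun (fderiv_const_smul_field a) x) v

theorem eulerOperator_const_mul (a : ℝ) (f : E → ℝ) (x : E) :
    eulerOperator (fun y => a * f y) x = a * eulerOperator f x :=
  fderiv_const_mul_apply a f x x

theorem eulerOperator_sum {ι : Type*} (s : Finset ι) {f : ι → E → F} {x : E}
    (hf : ∀ i ∈ s, DifferentiableAt ℝ (f i) x) :
    eulerOperator (fun y => ∑ i ∈ s, f i y) x = ∑ i ∈ s, eulerOperator (f i) x := by
  simp [eulerOperator, fderiv_fun_sum hf]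

theorem fderiv_eulerOperator_apply {f : E → F} (hf : ContDiff ℝ 2 f) (x v : E) :
    fderiv ℝ (eulerOperator f) x v
      = eulerOperator (fun y => fderiv ℝ f y v) x + fderiv ℝ f x v := by
  have hf' : DifferentiableAt ℝ (fderiv ℝ f) x :=
    (hf.fderiv_right (m := 1) (by norm_num)).differentiable one_ne_zero x
  have hsymm : fderiv ℝ (fderiv ℝ f) x v x = fderiv ℝ (fderiv ℝ f) x x v :=
    hf.contDiffAt.isSymmSndFDerivAt (by simp) v x
  have hconst : eulerOperator (fun y => fderiv ℝ f y v) x = fderiv ℝ (fderiv ℝ f) x x v := by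
    simp [eulerOperator, fderiv_clm_apply hf' (differentiableAt_const v)]
  change fderiv ℝ (fun y => fderiv ℝ f y (id y)) x v = _
  rw [fderiv_clm_apply hf' differentiableAt_id, hconst, ← hsymm]
  simp [add_comm]

theorem fderiv_fderiv_eulerOperator_apply {f : E → F} (hf : ContDiff ℝ 3 f) (x v : E) :
    fderiv ℝ (fun y => fderiv ℝ (eulerOperator f) y v) x v
      = eulerOperator (fun y => fderiv ℝ (fun z => fderiv ℝ f z v) y v) x
        + 2 • fderiv ℝ (fun y => fderiv ℝ f y v) x v := by
  have hv : ContDiff ℝ 2 (fun y => fderiv ℝ f y v) :=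
    contDiff_fderiv_apply_const hf (by norm_num) v
  have hEv : ContDiff ℝ 1 (eulerOperator fun y => fderiv ℝ f y v) :=
    contDiff_eulerOperator hv (by norm_num)
  have hfst : (fun y => fderiv ℝ (eulerOperator f) y v)
      = fun y => eulerOperator (fun z => fderiv ℝ f z v) y + fderiv ℝ f y v :=
    funext fun y => fderiv_eulerOperator_apply (hf.of_le (by norm_num)) y v
  rw [hfst, fderiv_fun_add (hEv.differentiable one_ne_zero x) (hv.differentiable two_ne_zero x),
    add_apply, fderiv_eulerOperator_apply hv, two_nsmul, add_assoc]

theorem eulerOperator_eq_sum {n : ℕ} (f : EuclideanSpace ℝ (Fin n) → F)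
    (x : EuclideanSpace ℝ (Fin n)) :
    eulerOperator f x = ∑ i, x i • fderiv ℝ f x (EuclideanSpace.single i 1) := by
  have hx : ∑ i, x i • EuclideanSpace.single i (1 : ℝ) = x := by
    simpa using (EuclideanSpace.basisFun (Fin n) ℝ).sum_repr x
  calc eulerOperator f x = fderiv ℝ f x (∑ i, x i • EuclideanSpace.single i (1 : ℝ)) := by
        rw [hx, eulerOperator]
    _ = _ := by simp only [map_sum, map_smul]

end EulerOperator

section Laplacian

variable {n : ℕ} {f g : EuclideanSpace ℝ (Fin n) → ℝ}

theorem contDiff_lap {m p : ℕ∞ω} (hf : ContDiff ℝ p f) (hmp : m + 1 + 1 ≤ p) :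
    ContDiff ℝ m (lap f) :=
  ContDiff.sum fun _ _ =>
    contDiff_fderiv_apply_const (contDiff_fderiv_apply_const hf hmp _) le_rfl _

theorem contDiff_iterate_lap (hf : ContDiff ℝ ∞ f) (m : ℕ) : ContDiff ℝ ∞ (lap^[m] f) := by
  induction m with
  | zero => exact hf
  | succ m ih =>
    rw [Function.iterate_succ_apply']
    exact contDiff_lap ih (by simp)

theorem lap_add (hf : ContDiff ℝ 2 f) (hg : ContDiff ℝ 2 g) (x : EuclideanSpace ℝ (Fin n)) :
    lap (fun y => f y + g y) x = lap f x + lap g x := by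
  have hfst (v y : EuclideanSpace ℝ (Fin n)) :
      fderiv ℝ (fun z => f z + g z) y v = fderiv ℝ f y v + fderiv ℝ g y v := by
    rw [fderiv_fun_add (hf.differentiable two_ne_zero y) (hg.differentiable two_ne_zero y),
      add_apply]
  have hf₂ := differentiable_fderiv_apply_const hf
  have hg₂ := differentiable_fderiv_apply_const hg
  simp only [lap, hfst, fderiv_fun_add (hf₂ _ x) (hg₂ _ x), add_apply, Finset.sum_add_distrib]

theorem lap_mul (hf : ContDiff ℝ 2 f) (hg : ContDiff ℝ 2 g) (x : EuclideanSpace ℝ (Fin n)) :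
    lap (fun y => f y * g y) x
      = f x * lap g x
        + 2 * ∑ i, fderiv ℝ f x (EuclideanSpace.single i 1)
            * fderiv ℝ g x (EuclideanSpace.single i 1)
        + lap f x * g x := by
  have hf₁ := hf.differentiable two_ne_zero
  have hg₁ := hg.differentiable two_ne_zero
  have hfst (v y : EuclideanSpace ℝ (Fin n)) :
      fderiv ℝ (fun z => f z * g z) y v = f y * fderiv ℝ g y v + g y * fderiv ℝ f y v := by
    rw [fderiv_fun_mul (hf₁ y) (hg₁ y)]
    rfl
  have hf₂ := differentiable_fderiv_apply_const hf
  have hg₂ := differentiable_fderiv_apply_const hg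
  simp only [lap, hfst, Finset.mul_sum, Finset.sum_mul, ← Finset.sum_add_distrib]
  refine Finset.sum_congr rfl fun i _ => ?_
  rw [fderiv_fun_add ((hf₁ x).fun_mul (hg₂ _ x)) ((hg₁ x).fun_mul (hf₂ _ x)),
    fderiv_fun_mul (hf₁ x) (hg₂ _ x), fderiv_fun_mul (hg₁ x) (hf₂ _ x)]
  simp only [add_apply, smul_apply, smul_eq_mul]
  ring

theorem lap_const_mul (a : ℝ) (f : EuclideanSpace ℝ (Fin n) → ℝ) (x : EuclideanSpace ℝ (Fin n)) :
    lap (fun y => a * f y) x = a * lap f x := by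
  simp only [lap, fderiv_const_mul_apply, Finset.mul_sum]

theorem lap_eulerOperator (hf : ContDiff ℝ 3 f) (x : EuclideanSpace ℝ (Fin n)) :
    lap (eulerOperator f) x = eulerOperator (lap f) x + 2 * lap f x := by
  have hdiff (i : Fin n) : DifferentiableAt ℝ (fun y => fderiv ℝ
      (fun z => fderiv ℝ f z (EuclideanSpace.single i 1)) y (EuclideanSpace.single i 1)) x :=
    differentiable_fderiv_apply_const (contDiff_fderiv_apply_const hf (by norm_num) _) _ x
  have heuler : eulerOperator (lap f) x = ∑ i, eulerOperator (fun y => fderiv ℝ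
      (fun z => fderiv ℝ f z (EuclideanSpace.single i 1)) y (EuclideanSpace.single i 1)) x :=
    eulerOperator_sum Finset.univ fun i _ => hdiff i
  rw [heuler]
  simp only [lap, fderiv_fderiv_eulerOperator_apply hf, Finset.sum_add_distrib, Finset.mul_sum,
    nsmul_eq_mul, Nat.cast_ofNat]

end Laplacian

section NormSq

variable {n : ℕ} {f : EuclideanSpace ℝ (Fin n) → ℝ}

theorem lap_const_add_norm_sq (c : ℝ) (x : EuclideanSpace ℝ (Fin n)) :
    lap (fun y => c + ‖y‖ ^ 2) x = 2 * n := by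
  have hproj (i : Fin n) : fderiv ℝ (fun y : EuclideanSpace ℝ (Fin n) => y i) x
      = EuclideanSpace.proj i := (EuclideanSpace.proj (𝕜 := ℝ) i).fderiv
  simp [lap, EuclideanSpace.inner_single_right, fderiv_const_mul_apply, hproj, mul_comm]

theorem lap_const_add_norm_sq_mul (hf : ContDiff ℝ 2 f) (c : ℝ) (x : EuclideanSpace ℝ (Fin n)) :
    lap (fun y => (c + ‖y‖ ^ 2) * f y) x
      = (c + ‖x‖ ^ 2) * lap f x + 4 * eulerOperator f x + 2 * n * f x := by
  have hgrad : ∑ i, fderiv ℝ (fun y => c + ‖y‖ ^ 2) x (EuclideanSpace.single i 1)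
      * fderiv ℝ f x (EuclideanSpace.single i 1) = 2 * eulerOperator f x := by
    simp [EuclideanSpace.inner_single_right, eulerOperator_eq_sum, Finset.mul_sum, mul_assoc]
  rw [lap_mul (contDiff_const.add (contDiff_norm_sq ℝ)) hf, lap_const_add_norm_sq, hgrad]
  ring

theorem iterate_lap_const_add_norm_sq_mul (hf : ContDiff ℝ ∞ f) (c : ℝ) (m : ℕ)
    (x : EuclideanSpace ℝ (Fin n)) :
    lap^[m + 1] (fun y => (c + ‖y‖ ^ 2) * f y) x
      = (c + ‖x‖ ^ 2) * lap^[m + 1] f x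
        + (m + 1) * (4 * eulerOperator (lap^[m] f) x + 2 * (n + 2 * m) * lap^[m] f x) := by
  induction m generalizing x with
  | zero =>
    simp only [zero_add, Function.iterate_one, Function.iterate_zero, id_eq, Nat.cast_zero]
    rw [lap_const_add_norm_sq_mul (contDiff_infty.1 hf 2)]
    ring
  | succ m ih =>
    set g := lap^[m] f
    have hg : ContDiff ℝ ∞ g := contDiff_iterate_lap hf m
    have hg₂ : ContDiff ℝ 2 g := contDiff_infty.1 hg 2
    have hlap : ContDiff ℝ 2 (lap g) := contDiff_lap (contDiff_infty.1 hg 4) (by norm_num)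
    have heuler : ContDiff ℝ 2 (eulerOperator g) :=
      contDiff_eulerOperator (contDiff_infty.1 hg 3) (by norm_num)
    have hnorm : ContDiff ℝ 2 (fun y : EuclideanSpace ℝ (Fin n) => c + ‖y‖ ^ 2) :=
      contDiff_const.add (contDiff_norm_sq ℝ)
    have hsucc : lap^[m + 1] f = lap g := Function.iterate_succ_apply' lap m f
    have hsucc₂ : lap^[m + 1 + 1] f = lap (lap g) := by
      rw [Function.iterate_succ_apply', hsucc]
    rw [Function.iterate_succ_apply', funext ih, hsucc, hsucc₂,
      lap_add (hnorm.mul hlap) (by fun_prop), lap_const_add_norm_sq_mul hlap,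
      lap_const_mul, lap_add (by fun_prop) (by fun_prop), lap_const_mul, lap_const_mul,
      lap_eulerOperator (contDiff_infty.1 hg 3)]
    push_cast
    ring

end NormSq

section Bubble

variable {E : Type*} [NormedAddCommGroup E] [InnerProductSpace ℝ E] {c : ℝ}

theorem contDiff_const_add_norm_sq_rpow {m : ℕ∞ω} (hc : 0 < c) (t : ℝ) :
    ContDiff ℝ m (fun y : E => (c + ‖y‖ ^ 2) ^ t) :=
  (contDiff_const.add (contDiff_norm_sq ℝ)).rpow_const_of_ne fun _ => by positivity

theorem fderiv_const_add_norm_sq_rpow_apply (hc : 0 < c) (t : ℝ) (x v : E) :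
    fderiv ℝ (fun y : E => (c + ‖y‖ ^ 2) ^ t) x v = 2 * t * (⟪x, v⟫ * (c + ‖x‖ ^ 2) ^ (t - 1)) := by
  have hbase : HasFDerivAt (fun y : E => c + ‖y‖ ^ 2) (2 • innerSL ℝ x) x :=
    (hasStrictFDerivAt_norm_sq x).hasFDerivAt.const_add c
  rw [(hbase.rpow_const (p := t) (Or.inl (by positivity))).fderiv]
  simp only [smul_apply, innerSL_apply_apply, smul_eq_mul, nsmul_eq_mul, Nat.cast_ofNat]
  ring

theorem eulerOperator_const_add_norm_sq_rpow (hc : 0 < c) (t : ℝ) (x : E) :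
    eulerOperator (fun y : E => (c + ‖y‖ ^ 2) ^ t) x
      = 2 * t * (‖x‖ ^ 2 * (c + ‖x‖ ^ 2) ^ (t - 1)) := by
  rw [eulerOperator, fderiv_const_add_norm_sq_rpow_apply hc, real_inner_self_eq_norm_sq]

theorem fderiv_fderiv_const_add_norm_sq_rpow_apply (hc : 0 < c) (t : ℝ) (x v : E) :
    fderiv ℝ (fun y => fderiv ℝ (fun z : E => (c + ‖z‖ ^ 2) ^ t) y v) x v
      = 2 * t * (‖v‖ ^ 2 * (c + ‖x‖ ^ 2) ^ (t - 1)
          + 2 * (t - 1) * (⟪x, v⟫ ^ 2 * (c + ‖x‖ ^ 2) ^ (t - 2))) := by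
  have hinner : HasFDerivAt (fun y : E => ⟪y, v⟫) (innerSL ℝ v) x := by
    simp_rw [real_inner_comm v]
    exact (innerSL ℝ v).hasFDerivAt
  have hpow : DifferentiableAt ℝ (fun y : E => (c + ‖y‖ ^ 2) ^ (t - 1)) x :=
    (contDiff_const_add_norm_sq_rpow hc _).differentiable one_ne_zero x
  simp only [fderiv_const_add_norm_sq_rpow_apply hc]
  rw [fderiv_const_mul_apply, fderiv_fun_mul hinner.differentiableAt hpow, hinner.fderiv]
  simp only [smul_apply, add_apply, smul_eq_mul, innerSL_apply_apply, real_inner_self_eq_norm_sq,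
    fderiv_const_add_norm_sq_rpow_apply hc, show t - 1 - 1 = t - 2 by ring]
  ring

variable {n : ℕ}

theorem lap_const_add_norm_sq_rpow (hc : 0 < c) (t : ℝ) (x : EuclideanSpace ℝ (Fin n)) :
    lap (fun y => (c + ‖y‖ ^ 2) ^ t) x
      = 2 * t * (n * (c + ‖x‖ ^ 2) ^ (t - 1)
          + 2 * (t - 1) * (‖x‖ ^ 2 * (c + ‖x‖ ^ 2) ^ (t - 2))) := by
  simp only [lap, fderiv_fderiv_const_add_norm_sq_rpow_apply hc]
  simp [EuclideanSpace.inner_single_right, EuclideanSpace.real_norm_sq_eq x,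
    ← Finset.mul_sum, ← Finset.sum_mul, Finset.sum_add_distrib]

/-- `t` is the exponent at which the `(c + ‖x‖ ^ 2) ^ t` terms cancel. -/
theorem lap_add_eulerOperator_critical_rpow (hc : 0 < c) (κ : ℝ) {t : ℝ}
    (ht : t = -((n + 2 * κ) / 2)) (x : EuclideanSpace ℝ (Fin n)) :
    (c + ‖x‖ ^ 2) * lap (fun y => (c + ‖y‖ ^ 2) ^ t) x
        + (κ + 1) * (4 * eulerOperator (fun y => (c + ‖y‖ ^ 2) ^ t) x
            + 2 * (n + 2 * κ) * (c + ‖x‖ ^ 2) ^ t)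
      = -c * ((n - 2 * (κ + 1)) * (n + 2 * κ)) * (c + ‖x‖ ^ 2) ^ (t - 1) := by
  have hpos : 0 < c + ‖x‖ ^ 2 := by positivity
  have hsub_two : (c + ‖x‖ ^ 2) ^ (t - 1) = (c + ‖x‖ ^ 2) ^ (t - 2) * (c + ‖x‖ ^ 2) := by
    rw [← Real.rpow_add_one hpos.ne']
    ring_nf
  have hsub_one : (c + ‖x‖ ^ 2) ^ t = (c + ‖x‖ ^ 2) ^ (t - 1) * (c + ‖x‖ ^ 2) := by
    rw [← Real.rpow_add_one hpos.ne', sub_add_cancel]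
  rw [lap_const_add_norm_sq_rpow hc, eulerOperator_const_add_norm_sq_rpow hc, hsub_one, hsub_two,
    ht]
  ring

theorem iterate_lap_bubble (hc : 0 < c) (k : ℕ) (x : EuclideanSpace ℝ (Fin n)) :
    lap^[k] (fun y => (c + ‖y‖ ^ 2) ^ (-(((n : ℝ) - 2 * k) / 2))) x
      = (-c) ^ k * (∏ ℓ ∈ Finset.Icc 1 k, (((n : ℝ) - 2 * ℓ) * ((n : ℝ) + 2 * ℓ - 2)))
          * (c + ‖x‖ ^ 2) ^ (-(((n : ℝ) + 2 * k) / 2)) := by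
  induction k generalizing x with
  | zero => simp
  | succ k ih =>
    set C := (-c) ^ k * ∏ ℓ ∈ Finset.Icc 1 k, (((n : ℝ) - 2 * ℓ) * ((n : ℝ) + 2 * ℓ - 2))
    set t := -(((n : ℝ) + 2 * k) / 2) with ht
    have hfactor : (fun y : EuclideanSpace ℝ (Fin n) =>
        (c + ‖y‖ ^ 2) ^ (-(((n : ℝ) - 2 * (k + 1 : ℕ)) / 2)))
        = fun y => (c + ‖y‖ ^ 2) * (c + ‖y‖ ^ 2) ^ (-(((n : ℝ) - 2 * k) / 2)) := by
      funext y
      have hpos : 0 < c + ‖y‖ ^ 2 := by positivity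
      rw [mul_comm (c + ‖y‖ ^ 2), ← Real.rpow_add_one hpos.ne']
      push_cast
      ring_nf
    rw [hfactor, iterate_lap_const_add_norm_sq_mul (contDiff_const_add_norm_sq_rpow hc _),
      Function.iterate_succ_apply', funext ih, lap_const_mul,
      eulerOperator_const_mul, Finset.prod_Icc_succ_top (Nat.le_add_left 1 k),
      show -(((n : ℝ) + 2 * (k + 1 : ℕ)) / 2) = t - 1 by rw [ht]; push_cast; ring]
    push_cast
    linear_combination C * lap_add_eulerOperator_critical_rpow hc k ht x

theorem neg_one_pow_mul_iterate_lap_bubble (hc : 0 < c) (k : ℕ) (x : EuclideanSpace ℝ (Fin n)) :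
    (-1 : ℝ) ^ k * lap^[k] (fun y => (c + ‖y‖ ^ 2) ^ (-(((n : ℝ) - 2 * k) / 2))) x
      = c ^ k * (∏ ℓ ∈ Finset.Icc 1 k, (((n : ℝ) - 2 * ℓ) * ((n : ℝ) + 2 * ℓ - 2)))
          * (c + ‖x‖ ^ 2) ^ (-(((n : ℝ) + 2 * k) / 2)) := by
  rw [iterate_lap_bubble hc, ← mul_assoc, ← mul_assoc, ← mul_pow, neg_one_mul, neg_neg]

theorem bubble_solves_critical_equation_general {k : ℕ} (hn : n ≠ 2 * k) (hc : 0 < c) :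
    (∀ x : EuclideanSpace ℝ (Fin n),
      (-1 : ℝ) ^ k
          * lap^[k] (fun y => (c + ‖y‖ ^ 2) ^ (-(((n : ℝ) - 2 * k) / 2))) x
        = c ^ k * (∏ ℓ ∈ Finset.Icc 1 k, (((n : ℝ) - 2 * ℓ) * ((n : ℝ) + 2 * ℓ - 2)))
            * (c + ‖x‖ ^ 2) ^ (-(((n : ℝ) + 2 * k) / 2)))
    ∧ (∀ x : EuclideanSpace ℝ (Fin n),
      (0 : ℝ) < (c + ‖x‖ ^ 2) ^ (-(((n : ℝ) - 2 * k) / 2))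
      ∧ (-1 : ℝ) ^ k
            * lap^[k] (fun y => (c + ‖y‖ ^ 2) ^ (-(((n : ℝ) - 2 * k) / 2))) x
          = c ^ k * (∏ ℓ ∈ Finset.Icc 1 k, (((n : ℝ) - 2 * ℓ) * ((n : ℝ) + 2 * ℓ - 2)))
              * ((c + ‖x‖ ^ 2) ^ (-(((n : ℝ) - 2 * k) / 2)))
                  ^ (((n : ℝ) + 2 * k) / ((n : ℝ) - 2 * k))) := by
  have hdenom : (n : ℝ) - 2 * k ≠ 0 := sub_ne_zero.2 (by exact_mod_cast hn)
  have hexp : -(((n : ℝ) - 2 * k) / 2) * (((n : ℝ) + 2 * k) / ((n : ℝ) - 2 * k))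
      = -(((n : ℝ) + 2 * k) / 2) := by
    field_simp
  refine ⟨neg_one_pow_mul_iterate_lap_bubble hc k, fun x => ⟨by positivity, ?_⟩⟩
  rw [neg_one_pow_mul_iterate_lap_bubble hc, ← Real.rpow_mul (by positivity), hexp]

end Bubble

/-- The standard bubble `U(x) = (1+|x|²)^{-(n-2k)/2}` satisfies
`(-Δ)ᵏU = [∏_{ℓ=1}^k (n-2ℓ)(n+2ℓ-2)]·(1+|x|²)^{-(n+2k)/2}`, i.e. it is a positive
solution of the critical equation `(-Δ)ᵏU = Λ_{n,k} U^{(n+2k)/(n-2k)}`. -/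
theorem bubble_solves_critical_equation
    (n k : ℕ) (hk : 1 ≤ k) (hn : 2 * k < n) :
    (∀ x : EuclideanSpace ℝ (Fin n),
      (-1 : ℝ) ^ k
          * lap^[k] (fun y => (1 + ‖y‖ ^ 2) ^ (-(((n : ℝ) - 2 * k) / 2))) x
        = (∏ ℓ ∈ Finset.Icc 1 k, (((n : ℝ) - 2 * ℓ) * ((n : ℝ) + 2 * ℓ - 2)))
            * (1 + ‖x‖ ^ 2) ^ (-(((n : ℝ) + 2 * k) / 2)))
    ∧ (∀ x : EuclideanSpace ℝ (Fin n),
      (0 : ℝ) < (1 + ‖x‖ ^ 2) ^ (-(((n : ℝ) - 2 * k) / 2))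
      ∧ (-1 : ℝ) ^ k
            * lap^[k] (fun y => (1 + ‖y‖ ^ 2) ^ (-(((n : ℝ) - 2 * k) / 2))) x
          = (∏ ℓ ∈ Finset.Icc 1 k, (((n : ℝ) - 2 * ℓ) * ((n : ℝ) + 2 * ℓ - 2)))
              * ((1 + ‖x‖ ^ 2) ^ (-(((n : ℝ) - 2 * k) / 2)))
                  ^ (((n : ℝ) + 2 * k) / ((n : ℝ) - 2 * k))) := by
  simpa only [one_pow, one_mul] using
    bubble_solves_critical_equation_general (k := k) hn.ne' one_pos
end

section
/- Let k, n be integers with 1 ≤ k and n > 2k, let U(x) = (1 + |x|²)^{−(n−2k)/2} on ℝⁿ, and set S_{n,k} = [ ∏_{ℓ=1}^{k} ((n+2ℓ−2)(n−2ℓ)/4) ] · ( 2π^{(n+1)/2} / Γ((n+1)/2) )^{2k/n}. Then the integrals ∫_{ℝⁿ} U·(−Δ)^k U dx and ∫_{ℝⁿ} U^{2n/(n−2k)} dx are finite and positive, and equality holds in the sharp Sobolev inequality: ∫_{ℝⁿ} U(x)·((−Δ)^k U)(x) dx = S_{n,k} · ( ∫_{ℝⁿ} U(x)^{2n/(n−2k)}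 dx )^{(n−2k)/n}. -/
open scoped Real

/-- The standard bubble `U(x) = (1+|x|²)^{-(n-2k)/2}`. -/
noncomputable def bubble (n k : ℕ) (x : EuclideanSpace ℝ (Fin n)) : ℝ :=
  (1 + ‖x‖ ^ 2) ^ (-(((n : ℝ) - 2 * k) / 2))

/-!
Write `w = 1 + ‖x‖²` and `n = dim E`. The Laplacian of `w ^ (t - n / 2)` is a combination of
`w ^ (t - 1 - n / 2)` and `w ^ (t - 2 - n / 2)`, so iterating it produces more and more powers. For
the bubble `U = w ^ (k - n / 2)` all but one of them cancel: `(-Δ)ᵏ U = 4ᵏ Cₖ w ^ (-k - n / 2)` with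
`Cₖ = ∏ (n + 2ℓ - 2) (n - 2ℓ) / 4`. Hence `U · (-Δ)ᵏ U` and `U ^ (2n / (n - 2k))` are both multiples
of `w ^ (-n)`, whose integral is `2 ^ (-n)` times the volume of the `n`-sphere by Gaussian
subordination and the duplication formula for `Γ`; the powers of `2` cancel in the identity.
-/

open Finset MeasureTheory Module Set
open scoped InnerProductSpace Laplacian Topology

section Laplacian

variable {E F : Type*} [NormedAddCommGroup E] [InnerProductSpace ℝ E]
  [NormedAddCommGroup F] [NormedSpace ℝ F]

theorem hasFDerivAt_comp_norm_sq {φ : ℝ → ℝ} {φ' : ℝ} {x : E} (hφ : HasDerivAt φ φ' (‖x‖ ^ 2)) :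
    HasFDerivAt (fun y => φ (‖y‖ ^ 2)) ((2 * φ') • innerSL ℝ x) x := by
  have norm_sq : HasFDerivAt (fun y : E => ‖y‖ ^ 2) (2 • innerSL ℝ x) x := by
    simpa using (hasFDerivAt_id x).norm_sq
  refine (hφ.comp_hasFDerivAt x norm_sq).congr_fderiv ?_
  module

variable [FiniteDimensional ℝ E]

theorem contDiff_laplacian {f : E → F} {m n : WithTop ℕ∞} (hf : ContDiff ℝ n f)
    (hmn : m + 2 ≤ n) : ContDiff ℝ m (Δ f) := by
  rw [InnerProductSpace.laplacian_eq_iteratedFDeriv_stdOrthonormalBasis]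
  exact ContDiff.sum fun i _ =>
    (ContinuousMultilinearMap.apply ℝ (fun _ : Fin 2 => E) F _).contDiff.comp
      (hf.iteratedFDeriv_right (i := 2) (by exact_mod_cast hmn))

theorem contDiff_laplacian_of_two_mul_succ {f : E → F} {k : ℕ}
    (hf : ContDiff ℝ (2 * (k + 1) : ℕ) f) : ContDiff ℝ (2 * k : ℕ) (Δ f) :=
  contDiff_laplacian hf (by exact_mod_cast le_rfl)

theorem laplacian_iterate_sub {k : ℕ} {f g : E → F} (hf : ContDiff ℝ (2 * k : ℕ) f)
    (hg : ContDiff ℝ (2 * k : ℕ) g) : Δ^[k] (f - g) = Δ^[k] f - Δ^[k] g := by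
  induction k generalizing f g with
  | zero => rfl
  | succ k ih =>
    have two_le : (2 : WithTop ℕ∞) ≤ (2 * (k + 1) : ℕ) := by norm_cast; omega
    have laplacian_sub : Δ (f - g) = Δ f - Δ g := funext fun x =>
      (hf.of_le two_le).contDiffAt.laplacian_sub (hg.of_le two_le).contDiffAt
    rw [Function.iterate_succ_apply, laplacian_sub,
      ih (contDiff_laplacian_of_two_mul_succ hf) (contDiff_laplacian_of_two_mul_succ hg)]
    rfl

theorem laplacian_iterate_smul {k : ℕ} {f : E → F} (c : ℝ) (hf : ContDiff ℝ (2 * k : ℕ) f) :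
    Δ^[k] (c • f) = c • Δ^[k] f := by
  induction k generalizing f with
  | zero => rfl
  | succ k ih =>
    have two_le : (2 : WithTop ℕ∞) ≤ (2 * (k + 1) : ℕ) := by norm_cast; omega
    have laplacian_smul : Δ (c • f) = c • Δ f := funext fun x =>
      InnerProductSpace.laplacian_smul c (hf.of_le two_le).contDiffAt
    rw [Function.iterate_succ_apply, laplacian_smul, ih (contDiff_laplacian_of_two_mul_succ hf)]
    rfl

theorem laplacian_comp_norm_sq {φ φ' : ℝ → ℝ} {φ'' : ℝ} {x : E}
    (hφ : ∀ᶠ t in 𝓝 (‖x‖ ^ 2), HasDerivAt φ (φ' t) t) (hφ' : HasDerivAt φ' φ'' (‖x‖ ^ 2)) :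
    Δ (fun y : E => φ (‖y‖ ^ 2)) x
      = 4 * ‖x‖ ^ 2 * φ'' + 2 * finrank ℝ E * φ' (‖x‖ ^ 2) := by
  have fderiv_eq : fderiv ℝ (fun y : E => φ (‖y‖ ^ 2))
      =ᶠ[𝓝 x] fun y => (2 * φ' (‖y‖ ^ 2)) • innerSL ℝ y :=
    ((continuous_norm.pow 2).continuousAt.eventually hφ).mono fun y hy =>
      (hasFDerivAt_comp_norm_sq hy).fderiv
  have hessian (v : E) : iteratedFDeriv ℝ 2 (fun y : E => φ (‖y‖ ^ 2)) x ![v, v]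
      = 4 * φ'' * ⟪x, v⟫_ℝ ^ 2 + 2 * φ' (‖x‖ ^ 2) * ‖v‖ ^ 2 := by
    rw [iteratedFDeriv_two_apply, fderiv_eq.fderiv_eq,
      (((hasFDerivAt_comp_norm_sq hφ').const_mul 2).fun_smul (innerSL ℝ).hasFDerivAt).fderiv]
    simp only [Matrix.cons_val_zero, Matrix.cons_val_one, Matrix.cons_val_fin_one, add_apply,
      smul_apply, ContinuousLinearMap.smulRight_apply, innerSL_apply_apply ℝ, smul_eq_mul,
      real_inner_self_eq_norm_sq]
    ring
  rw [InnerProductSpace.laplacian_eq_iteratedFDeriv_stdOrthonormalBasis]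
  simp only [hessian, sum_add_distrib, ← mul_sum, OrthonormalBasis.sum_sq_inner_left,
    OrthonormalBasis.norm_eq_one, one_pow, sum_const, card_univ, Fintype.card_fin, nsmul_eq_mul]
  ring

end Laplacian

section Lap

variable {n : ℕ}

theorem lap_eq_laplacian {f : EuclideanSpace ℝ (Fin n) → ℝ} (hf : ContDiff ℝ 2 f) :
    lap f = Δ f := by
  have differentiable_fderiv : Differentiable ℝ (fderiv ℝ f) :=
    (hf.fderiv_right (m := 1) (by norm_num)).differentiable one_ne_zero
  rw [InnerProductSpace.laplacian_eq_iteratedFDeriv_orthonormalBasis f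
    (EuclideanSpace.basisFun (Fin n) ℝ)]
  funext x
  refine sum_congr rfl fun i _ => ?_
  rw [iteratedFDeriv_two_apply, fderiv_clm_apply (differentiable_fderiv x)
    (differentiableAt_const _)]
  simp

theorem lap_iterate_eq_laplacian_iterate {k : ℕ} {f : EuclideanSpace ℝ (Fin n) → ℝ}
    (hf : ContDiff ℝ (2 * k : ℕ) f) : lap^[k] f = Δ^[k] f := by
  induction k generalizing f with
  | zero => rfl
  | succ k ih =>
    rw [Function.iterate_succ_apply, Function.iterate_succ_apply,
      lap_eq_laplacian (hf.of_le (by norm_cast; omega)),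
      ih (contDiff_laplacian_of_two_mul_succ hf)]

end Lap

section GJMS

/-- The value `P₂ₖ 1 = ∏ (d + 2ℓ - 2) (d - 2ℓ) / 4` at the constant function of the conformally
covariant (GJMS) operator of order `2k` on the `d`-sphere. -/
noncomputable def gjmsConstant (d : ℝ) (k : ℕ) : ℝ :=
  ∏ ℓ ∈ Finset.Icc 1 k, (d + 2 * ℓ - 2) * (d - 2 * ℓ) / 4

theorem gjmsConstant_zero (d : ℝ) : gjmsConstant d 0 = 1 := by
  simp [gjmsConstant]

theorem gjmsConstant_succ (d : ℝ) (k : ℕ) :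
    gjmsConstant d (k + 1) = gjmsConstant d k * ((d + 2 * k) * (d - 2 * k - 2) / 4) := by
  rw [gjmsConstant, Finset.prod_Icc_succ_top (by omega), gjmsConstant]
  push_cast
  ring

theorem gjmsConstant_pos {d : ℝ} {k : ℕ} (hkd : 2 * k < d) : 0 < gjmsConstant d k := by
  refine prod_pos fun ℓ hℓ => ?_
  have one_le : (1 : ℝ) ≤ ℓ := by exact_mod_cast (Finset.mem_Icc.mp hℓ).1
  have le_k : (ℓ : ℝ) ≤ k := by exact_mod_cast (Finset.mem_Icc.mp hℓ).2
  exact div_pos (mul_pos (by linarith) (by linarith)) four_pos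

end GJMS

section OneAddNormSqRpow

variable {E : Type*} [NormedAddCommGroup E]

/-- The power `(1 + ‖x‖²) ^ s` of the squared Japanese bracket; the bubble `U` is the case
`s = k - n / 2`, and the density of the sphere in stereographic coordinates is a multiple of the
case `s = -n`. -/
noncomputable def oneAddNormSqRpow (s : ℝ) (x : E) : ℝ :=
  (1 + ‖x‖ ^ 2) ^ s

theorem oneAddNormSqRpow_pos (s : ℝ) (x : E) : 0 < oneAddNormSqRpow s x :=
  Real.rpow_pos_of_pos (zero_lt_one_add_norm_sq x) s

theorem oneAddNormSqRpow_add (s t : ℝ) (x : E) :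
    oneAddNormSqRpow (s + t) x = oneAddNormSqRpow s x * oneAddNormSqRpow t x :=
  Real.rpow_add (zero_lt_one_add_norm_sq x) s t

theorem oneAddNormSqRpow_rpow (s t : ℝ) (x : E) :
    oneAddNormSqRpow s x ^ t = oneAddNormSqRpow (s * t) x :=
  (Real.rpow_mul (zero_lt_one_add_norm_sq x).le s t).symm

variable [InnerProductSpace ℝ E]

theorem contDiff_oneAddNormSqRpow (s : ℝ) {m : WithTop ℕ∞} :
    ContDiff ℝ m (oneAddNormSqRpow s : E → ℝ) :=
  (contDiff_const.add (contDiff_norm_sq ℝ)).rpow_const_of_ne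
    fun x => (zero_lt_one_add_norm_sq x).ne'

variable [FiniteDimensional ℝ E]

theorem laplacian_oneAddNormSqRpow (s : ℝ) :
    Δ (oneAddNormSqRpow s : E → ℝ)
      = (2 * s * (2 * s - 2 + finrank ℝ E)) • oneAddNormSqRpow (s - 1)
        - (4 * s * (s - 1)) • oneAddNormSqRpow (s - 2) := by
  have hasDerivAt_rpow (r : ℝ) {t : ℝ} (ht : 0 < 1 + t) :
      HasDerivAt (fun t => (1 + t) ^ r) (r * (1 + t) ^ (r - 1)) t := by
    simpa using ((hasDerivAt_id t).const_add 1).rpow_const (p := r) (Or.inl ht.ne')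
  funext x
  have base_pos := zero_lt_one_add_norm_sq x
  have base_pos_nhds : ∀ᶠ t in 𝓝 (‖x‖ ^ 2), 0 < 1 + t :=
    (continuous_const.add continuous_id).continuousAt.eventually_const_lt base_pos
  have shift : (1 + ‖x‖ ^ 2) ^ (s - 1) = (1 + ‖x‖ ^ 2) * (1 + ‖x‖ ^ 2) ^ (s - 2) := by
    rw [show s - 1 = 1 + (s - 2) by ring, Real.rpow_add base_pos, Real.rpow_one]
  have := laplacian_comp_norm_sq (base_pos_nhds.mono fun t => hasDerivAt_rpow s)
    ((hasDerivAt_rpow (s - 1) base_pos).const_mul s)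
  unfold oneAddNormSqRpow
  rw [this, sub_sub, one_add_one_eq_two, Pi.sub_apply, Pi.smul_apply, Pi.smul_apply]
  simp only [smul_eq_mul, shift]
  ring

theorem laplacian_oneAddNormSqRpow_sub_half_finrank (t : ℝ) :
    Δ (oneAddNormSqRpow (t - finrank ℝ E / 2) : E → ℝ)
      = (4 * (t - finrank ℝ E / 2) * (t - 1)) • oneAddNormSqRpow (t - 1 - finrank ℝ E / 2)
        - (4 * (t - finrank ℝ E / 2) * (t - 1 - finrank ℝ E / 2))
          • oneAddNormSqRpow (t - 2 - finrank ℝ E / 2) := by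
  rw [laplacian_oneAddNormSqRpow]
  congr 2 <;> ring_nf

theorem laplacian_iterate_oneAddNormSqRpow (k : ℕ) :
    Δ^[k] (oneAddNormSqRpow (k - finrank ℝ E / 2) : E → ℝ)
      = ((-4) ^ k * gjmsConstant (finrank ℝ E) k) • oneAddNormSqRpow (-k - finrank ℝ E / 2) := by
  have smooth (c s : ℝ) {m : WithTop ℕ∞} : ContDiff ℝ m (c • oneAddNormSqRpow s : E → ℝ) :=
    (contDiff_oneAddNormSqRpow s).const_smul c
  have iterate_smul (j : ℕ) (c s : ℝ) :
      Δ^[j] (c • oneAddNormSqRpow s : E → ℝ) = c • Δ^[j] (oneAddNormSqRpow s) :=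
    laplacian_iterate_smul c (contDiff_oneAddNormSqRpow s)
  induction k using Nat.twoStepInduction with
  | zero => simp [gjmsConstant_zero]
  | one =>
    rw [Function.iterate_one, laplacian_oneAddNormSqRpow_sub_half_finrank, gjmsConstant_succ,
      gjmsConstant_zero, Nat.cast_zero, Nat.cast_one, sub_self, show (1 - 2 : ℝ) = -1 by norm_num]
    module
  | more k ih ih_succ =>
    have laplacian_top : Δ (oneAddNormSqRpow ((k + 2 : ℕ) - finrank ℝ E / 2) : E → ℝ)
        = (4 * ((k : ℝ) + 2 - finrank ℝ E / 2) * (k + 1)) •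
            oneAddNormSqRpow ((k + 1 : ℕ) - finrank ℝ E / 2)
          - (4 * ((k : ℝ) + 2 - finrank ℝ E / 2) * (k + 1 - finrank ℝ E / 2)) •
            oneAddNormSqRpow (k - finrank ℝ E / 2) := by
      rw [laplacian_oneAddNormSqRpow_sub_half_finrank]
      push_cast
      ring_nf
    have laplacian_bot : Δ (oneAddNormSqRpow (-k - finrank ℝ E / 2) : E → ℝ)
        = (4 * ((k : ℝ) + finrank ℝ E / 2) * (k + 1)) •
            oneAddNormSqRpow (-(k + 1 : ℕ) - finrank ℝ E / 2)
          - (4 * ((k : ℝ) + finrank ℝ E / 2) * (k + 1 + finrank ℝ E / 2)) •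
            oneAddNormSqRpow (-(k + 2 : ℕ) - finrank ℝ E / 2) := by
      rw [laplacian_oneAddNormSqRpow_sub_half_finrank]
      push_cast
      ring_nf
    -- By `laplacian_top` both inductive hypotheses apply, the second one under one more Laplacian,
    -- and the two multiples of `oneAddNormSqRpow (-(k + 1) - finrank ℝ E / 2)` cancel.
    rw [Function.iterate_succ_apply, laplacian_top, laplacian_iterate_sub (smooth _ _) (smooth _ _),
      iterate_smul, iterate_smul, ih_succ, Function.iterate_succ_apply', ih,
      ← Function.iterate_one Δ, iterate_smul, Function.iterate_one, laplacian_bot,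
      gjmsConstant_succ _ (k + 1), gjmsConstant_succ _ k]
    push_cast
    module

end OneAddNormSqRpow

section SphereVolume

/-- The `d`-dimensional volume `2 π ^ ((d + 1) / 2) / Γ((d + 1) / 2)` of the unit sphere in
`ℝ ^ (d + 1)`. -/
noncomputable def sphereVolume (d : ℝ) : ℝ :=
  2 * π ^ ((d + 1) / 2) / Real.Gamma ((d + 1) / 2)

theorem Gamma_mul_sphereVolume {d : ℝ} (hd : 0 < d) :
    Real.Gamma d * sphereVolume d = 2 ^ d * (π ^ (d / 2) * Real.Gamma (d / 2)) := by
  have duplication : Real.Gamma (d / 2) * Real.Gamma ((d + 1) / 2)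
      = Real.Gamma d * (2 / 2 ^ d) * π ^ (1 / 2 : ℝ) := by
    have := Real.Gamma_mul_Gamma_add_half (d / 2)
    rwa [← add_div, mul_div_cancel₀ d two_ne_zero, Real.rpow_sub two_pos, Real.rpow_one,
      Real.sqrt_eq_rpow] at this
  have pi_rpow : π ^ ((d + 1) / 2) = π ^ (d / 2) * π ^ (1 / 2 : ℝ) := by
    rw [add_div, Real.rpow_add Real.pi_pos]
  have Gamma_ne : Real.Gamma ((d + 1) / 2) ≠ 0 := (Real.Gamma_pos_of_pos (by positivity)).ne'
  have two_rpow_ne : (2 : ℝ) ^ d ≠ 0 := (Real.rpow_pos_of_pos two_pos d).ne'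
  rw [sphereVolume, pi_rpow]
  field_simp at duplication ⊢
  linear_combination -duplication

end SphereVolume

section Integral

variable {E : Type*} [NormedAddCommGroup E]

/-- The integrand of the subordination formula
`Γ(s) (1 + ‖x‖²) ^ (-s) = ∫₀^∞ t ^ (s - 1) e ^ (-(1 + ‖x‖²) t) dt`, which writes
`oneAddNormSqRpow (-s)` as a superposition of Gaussians. -/
noncomputable def gaussianSubordination (s : ℝ) (x : E) (t : ℝ) : ℝ :=
  t ^ (s - 1) * Real.exp (-((1 + ‖x‖ ^ 2) * t))

theorem integral_Ioi_gaussianSubordination {s : ℝ} (hs : 0 < s) (x : E) :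
    ∫ t in Ioi 0, gaussianSubordination s x t = Real.Gamma s * oneAddNormSqRpow (-s) x := by
  have base_pos := zero_lt_one_add_norm_sq x
  rw [oneAddNormSqRpow, Real.rpow_neg base_pos.le, ← Real.inv_rpow base_pos.le, ← one_div, mul_comm]
  exact Real.integral_rpow_mul_exp_neg_mul_Ioi hs base_pos

theorem integrableOn_gaussianSubordination {s : ℝ} (hs : 0 < s) (x : E) :
    IntegrableOn (gaussianSubordination s x) (Ioi 0) := by
  unfold gaussianSubordination
  simpa only [Real.rpow_one, neg_mul] using
    integrableOn_rpow_mul_exp_neg_mul_rpow (p := 1) (s := s - 1) (by linarith) one_pos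
      (zero_lt_one_add_norm_sq x)

theorem gaussianSubordination_nonneg (s : ℝ) (x : E) {t : ℝ} (ht : 0 < t) :
    0 ≤ gaussianSubordination s x t := by
  unfold gaussianSubordination
  positivity

variable [InnerProductSpace ℝ E] [FiniteDimensional ℝ E] [MeasurableSpace E] [BorelSpace E]

theorem integrable_oneAddNormSqRpow_neg {s : ℝ} (hs : (finrank ℝ E : ℝ) / 2 < s) :
    Integrable (oneAddNormSqRpow (-s) : E → ℝ) := by
  have finrank_lt : (finrank ℝ E : ℝ) < 2 * s := by linarith
  unfold oneAddNormSqRpow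
  convert integrable_rpow_neg_one_add_norm_sq (μ := (volume : Measure E)) finrank_lt using 3
  ring

theorem integral_oneAddNormSqRpow_neg_pos {s : ℝ} (hs : (finrank ℝ E : ℝ) / 2 < s) :
    0 < ∫ x : E, oneAddNormSqRpow (-s) x := by
  rw [integral_pos_iff_support_of_nonneg (fun x => (oneAddNormSqRpow_pos _ x).le)
    (integrable_oneAddNormSqRpow_neg hs),
    Function.support_eq_univ fun x => (oneAddNormSqRpow_pos _ x).ne']
  exact Measure.measure_univ_pos.mpr (NeZero.ne _)

theorem integral_gaussianSubordination (s : ℝ) {t : ℝ} (ht : 0 < t) :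
    ∫ x : E, gaussianSubordination s x t
      = π ^ (finrank ℝ E / 2 : ℝ) * (t ^ (s - finrank ℝ E / 2 - 1) * Real.exp (-(1 * t))) := by
  have exp_mul_gaussian (x : E) : gaussianSubordination s x t
      = t ^ (s - 1) * Real.exp (-(1 * t)) * Real.exp (-t * ‖x‖ ^ 2) := by
    rw [gaussianSubordination, mul_assoc, ← Real.exp_add]
    ring_nf
  simp only [exp_mul_gaussian]
  rw [integral_const_mul, GaussianFourier.integral_rexp_neg_mul_sq_norm ht,
    Real.div_rpow Real.pi_pos.le ht.le, sub_right_comm, Real.rpow_sub ht (s - 1)]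
  ring

theorem integrable_uncurry_gaussianSubordination {s : ℝ} (hs : (finrank ℝ E : ℝ) / 2 < s) :
    Integrable (Function.uncurry (gaussianSubordination s : E → ℝ → ℝ))
      (volume.prod (volume.restrict (Ioi 0))) := by
  have s_pos : 0 < s := lt_of_le_of_lt (by positivity) hs
  have norm_integral (x : E) : ∫ t in Ioi 0, ‖gaussianSubordination s x t‖
      = Real.Gamma s * oneAddNormSqRpow (-s) x := by
    rw [← integral_Ioi_gaussianSubordination s_pos]
    exact setIntegral_congr_fun measurableSet_Ioi fun t ht =>
      Real.norm_of_nonneg (gaussianSubordination_nonneg s x ht)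
  have measurable : Measurable (Function.uncurry (gaussianSubordination s : E → ℝ → ℝ)) := by
    unfold gaussianSubordination Function.uncurry
    fun_prop
  refine (integrable_prod_iff measurable.aestronglyMeasurable).mpr
    ⟨.of_forall fun x => integrableOn_gaussianSubordination s_pos x, ?_⟩
  simpa only [Function.uncurry_apply_pair, norm_integral] using
    (integrable_oneAddNormSqRpow_neg hs).const_mul (Real.Gamma s)

theorem Gamma_mul_integral_oneAddNormSqRpow_neg {s : ℝ} (hs : (finrank ℝ E : ℝ) / 2 < s) :
    Real.Gamma s * ∫ x : E, oneAddNormSqRpow (-s) x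
      = π ^ (finrank ℝ E / 2 : ℝ) * Real.Gamma (s - finrank ℝ E / 2) := by
  have s_pos : 0 < s := lt_of_le_of_lt (by positivity) hs
  calc Real.Gamma s * ∫ x : E, oneAddNormSqRpow (-s) x
      = ∫ x : E, ∫ t in Ioi 0, gaussianSubordination s x t := by
        simp only [integral_Ioi_gaussianSubordination s_pos, integral_const_mul]
    _ = ∫ t in Ioi 0, ∫ x : E, gaussianSubordination s x t :=
        integral_integral_swap (integrable_uncurry_gaussianSubordination hs)
    _ = ∫ t in Ioi 0, π ^ (finrank ℝ E / 2 : ℝ)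
          * (t ^ (s - finrank ℝ E / 2 - 1) * Real.exp (-(1 * t))) :=
        setIntegral_congr_fun measurableSet_Ioi fun t ht => integral_gaussianSubordination s ht
    _ = π ^ (finrank ℝ E / 2 : ℝ) * Real.Gamma (s - finrank ℝ E / 2) := by
        rw [integral_const_mul, Real.integral_rpow_mul_exp_neg_mul_Ioi (sub_pos.mpr hs) one_pos,
          one_div_one, Real.one_rpow, one_mul]

/-- Since `2 / (1 + ‖x‖²)` is the conformal factor of the inverse stereographic projection,
this computes the volume of the sphere in stereographic coordinates. -/
theorem two_rpow_mul_integral_oneAddNormSqRpow_neg_finrank [Nontrivial E] :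
    2 ^ (finrank ℝ E : ℝ) * ∫ x : E, oneAddNormSqRpow (-finrank ℝ E) x
      = sphereVolume (finrank ℝ E) := by
  have finrank_pos : (0 : ℝ) < finrank ℝ E := by exact_mod_cast Module.finrank_pos
  refine mul_left_cancel₀ (Real.Gamma_pos_of_pos finrank_pos).ne' ?_
  rw [Gamma_mul_sphereVolume finrank_pos, mul_left_comm,
    Gamma_mul_integral_oneAddNormSqRpow_neg (half_lt_self finrank_pos), sub_half]

end Integral

section SharpSobolev

theorem mul_rpow_div_mul_rpow_sub_div {c I m d : ℝ} (hc : 0 ≤ c) (hI : 0 < I) (hd : d ≠ 0) :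
    (c ^ d * I) ^ (m / d) * I ^ ((d - m) / d) = c ^ m * I := by
  rw [Real.mul_rpow (Real.rpow_nonneg hc d) hI.le, ← Real.rpow_mul hc, mul_div_cancel₀ m hd,
    mul_assoc, ← Real.rpow_add hI, ← add_div, add_sub_cancel, div_self hd, Real.rpow_one]

variable {E : Type*} [NormedAddCommGroup E]

theorem oneAddNormSqRpow_sub_half_rpow {d k : ℝ} (hkd : d - 2 * k ≠ 0) (x : E) :
    oneAddNormSqRpow (k - d / 2) x ^ (2 * d / (d - 2 * k)) = oneAddNormSqRpow (-d) x := by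
  have exponent_mul : (k - d / 2) * (2 * d / (d - 2 * k)) = -d := by
    rw [mul_div_assoc', div_eq_iff hkd]
    ring
  rw [oneAddNormSqRpow_rpow, exponent_mul]

variable [InnerProductSpace ℝ E] [FiniteDimensional ℝ E]

theorem oneAddNormSqRpow_mul_neg_laplacian_iterate (k : ℕ) (x : E) :
    oneAddNormSqRpow (k - finrank ℝ E / 2) x
        * ((-1) ^ k * Δ^[k] (oneAddNormSqRpow (k - finrank ℝ E / 2)) x)
      = 4 ^ k * gjmsConstant (finrank ℝ E) k * oneAddNormSqRpow (-finrank ℝ E) x := by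
  have neg_one_pow_mul : (-1 : ℝ) ^ k * (-4) ^ k = 4 ^ k := by rw [← mul_pow]; norm_num
  have exponent_add : (k - finrank ℝ E / 2 : ℝ) + (-k - finrank ℝ E / 2) = -finrank ℝ E := by ring
  rw [laplacian_iterate_oneAddNormSqRpow, Pi.smul_apply, smul_eq_mul, ← exponent_add,
    oneAddNormSqRpow_add, ← neg_one_pow_mul]
  ring

variable [MeasurableSpace E] [BorelSpace E]

theorem bubble_attains_sharp_sobolev_general (k : ℕ) (hk : 2 * k < finrank ℝ E) :
    Integrable (fun x : E => oneAddNormSqRpow (k - finrank ℝ E / 2) x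
        * ((-1) ^ k * Δ^[k] (oneAddNormSqRpow (k - finrank ℝ E / 2)) x))
    ∧ 0 < ∫ x : E, oneAddNormSqRpow (k - finrank ℝ E / 2) x
        * ((-1) ^ k * Δ^[k] (oneAddNormSqRpow (k - finrank ℝ E / 2)) x)
    ∧ Integrable (fun x : E => oneAddNormSqRpow (k - finrank ℝ E / 2) x
        ^ (2 * finrank ℝ E / (finrank ℝ E - 2 * k) : ℝ))
    ∧ 0 < ∫ x : E, oneAddNormSqRpow (k - finrank ℝ E / 2) x
        ^ (2 * finrank ℝ E / (finrank ℝ E - 2 * k) : ℝ)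
    ∧ ∫ x : E, oneAddNormSqRpow (k - finrank ℝ E / 2) x
          * ((-1) ^ k * Δ^[k] (oneAddNormSqRpow (k - finrank ℝ E / 2)) x)
        = gjmsConstant (finrank ℝ E) k
          * sphereVolume (finrank ℝ E) ^ (2 * k / finrank ℝ E : ℝ)
          * (∫ x : E, oneAddNormSqRpow (k - finrank ℝ E / 2) x
              ^ (2 * finrank ℝ E / (finrank ℝ E - 2 * k) : ℝ))
            ^ ((finrank ℝ E - 2 * k) / finrank ℝ E : ℝ) := by
  have hk' : (2 * k : ℝ) < finrank ℝ E := by exact_mod_cast hk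
  have finrank_pos : (0 : ℝ) < finrank ℝ E := lt_of_le_of_lt (by positivity) hk'
  have : Nontrivial E := nontrivial_of_finrank_pos (R := ℝ) (by exact_mod_cast finrank_pos)
  have integrable := integrable_oneAddNormSqRpow_neg (E := E) (half_lt_self finrank_pos)
  have integral_pos := integral_oneAddNormSqRpow_neg_pos (E := E) (half_lt_self finrank_pos)
  have two_rpow : (2 : ℝ) ^ (2 * k : ℝ) = 4 ^ k := by
    rw [Real.rpow_mul zero_le_two, Real.rpow_natCast, Real.rpow_ofNat]
    norm_num
  have gjms_pos := gjmsConstant_pos hk'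
  simp only [oneAddNormSqRpow_mul_neg_laplacian_iterate,
    oneAddNormSqRpow_sub_half_rpow (sub_pos.mpr hk').ne', integral_const_mul]
  refine ⟨integrable.const_mul _, by positivity, integrable, integral_pos, ?_⟩
  rw [← two_rpow_mul_integral_oneAddNormSqRpow_neg_finrank, mul_assoc (gjmsConstant _ _),
    mul_rpow_div_mul_rpow_sub_div zero_le_two integral_pos finrank_pos.ne', two_rpow]
  ring

end SharpSobolev

section Bubble

theorem bubble_eq_oneAddNormSqRpow (n k : ℕ) :
    bubble n k = oneAddNormSqRpow ((k : ℝ) - n / 2) := by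
  funext x
  rw [bubble, oneAddNormSqRpow]
  ring_nf

theorem lap_iterate_bubble (n k : ℕ) : lap^[k] (bubble n k) = Δ^[k] (bubble n k) := by
  rw [bubble_eq_oneAddNormSqRpow]
  exact lap_iterate_eq_laplacian_iterate (contDiff_oneAddNormSqRpow _)

end Bubble

/-- The standard bubble attains equality in the sharp Sobolev inequality for
`W^{k,2} ↪ L^{2n/(n-2k)}` on `ℝⁿ`: both integrals are finite and positive, and
`∫ U·(-Δ)ᵏU = S_{n,k} (∫ U^{2n/(n-2k)})^{(n-2k)/n}`. -/
theorem bubble_attains_sharp_sobolev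
    (n k : ℕ) (hk : 1 ≤ k) (hn : 2 * k < n) :
    MeasureTheory.Integrable
        (fun x : EuclideanSpace ℝ (Fin n) =>
          bubble n k x * ((-1 : ℝ) ^ k * lap^[k] (bubble n k) x))
    ∧ (0 : ℝ) < ∫ x, bubble n k x * ((-1 : ℝ) ^ k * lap^[k] (bubble n k) x)
    ∧ MeasureTheory.Integrable
        (fun x : EuclideanSpace ℝ (Fin n) =>
          bubble n k x ^ ((2 * n : ℝ) / ((n : ℝ) - 2 * k)))
    ∧ (0 : ℝ) < ∫ x, bubble n k x ^ ((2 * n : ℝ) / ((n : ℝ) - 2 * k))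
    ∧ ∫ x, bubble n k x * ((-1 : ℝ) ^ k * lap^[k] (bubble n k) x)
        = ((∏ ℓ ∈ Finset.Icc 1 k,
              (((n : ℝ) + 2 * ℓ - 2) * ((n : ℝ) - 2 * ℓ) / 4))
            * (2 * π ^ (((n : ℝ) + 1) / 2) / Real.Gamma (((n : ℝ) + 1) / 2))
                ^ ((2 * k : ℝ) / n))
          * (∫ x, bubble n k x ^ ((2 * n : ℝ) / ((n : ℝ) - 2 * k)))
              ^ (((n : ℝ) - 2 * k) / n) := by
  simpa only [lap_iterate_bubble, ← bubble_eq_oneAddNormSqRpow, finrank_euclideanSpace_fin,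
    gjmsConstant, sphereVolume] using
    bubble_attains_sharp_sobolev_general (E := EuclideanSpace ℝ (Fin n)) k (by simpa using hn)
end

section
/- Let μ be the probability measure on ℝ² given by dμ(x) = π^{−1}(1+|x|²)^{−2} dx. Then for every smooth compactly supported function u : ℝ² → ℝ, log( ∫_{ℝ²} e^{u} dμ ) ≤ ∫_{ℝ²} u dμ + (1/(16π)) ∫_{ℝ²} |∇u(x)|² dx. -/
/-!
Write the metric `e^u` times the round one as `w² |dp|²`, where `w = e^{u/2} (1 + |p|²)⁻¹`, and
compare the Dirichlet energy of `log w` with that of the case `u = 0`. Along the vertical line over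
`x`, let `φ` be the integral of `w`, the length of the line, and `a'` the integral of `w²`, the
derivative of the area `a` to the left of the line. Wirtinger's inequality bounds the energy of
`∂₂ log w` on the line below by `4 π² a' / φ²`. As `φ'` is the integral of `w ∂₁ log w`, the energy
of `∂₁ log w` is at least `2 k φ' - k² a'` for every `k`. Choosing `k` as on the round sphere of the
same total area `N`, the sum of the two bounds is at least the `x`-derivative of an explicit
function of `a` and `φ`. On `[-R, R]`, with `R` so large that `u` vanishes outside, the boundary
values are explicit, and as `R → ∞` the excess of energy over the case `u = 0` is seen to be at
least `4 π (log N - log π)`. An integration by parts identifies this excess with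
`(1/4) ∫ |∇u|² + 4 π ∫ u dμ`, while `N = π ∫ e^u dμ`.
-/

open scoped Real
open MeasureTheory

/-- The probability measure `dμ(x) = π⁻¹(1+|x|²)⁻² dx` on `ℝ²` (the pushforward of
the round measure on `S²` under stereographic projection, normalised). -/
noncomputable def sphMeasure : Measure (EuclideanSpace ℝ (Fin 2)) :=
  volume.withDensity fun x => ENNReal.ofReal (π⁻¹ * ((1 + ‖x‖ ^ 2) ^ 2)⁻¹)

namespace MoserOnofri

open Filter Topology Set

section PrimitiveFromMinusInfinity

variable {f : ℝ → ℝ}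

lemma hasDerivAt_integral_Iic (hf : Integrable f) (hc : Continuous f) (x : ℝ) :
    HasDerivAt (fun x => ∫ s in Iic x, f s) (f x) x := by
  have hsplit : (fun x => ∫ s in Iic x, f s) =
      fun x => (∫ s in Iic 0, f s) + ∫ s in (0 : ℝ)..x, f s := by
    funext x
    rw [← intervalIntegral.integral_Iic_sub_Iic hf.integrableOn hf.integrableOn]
    ring
  rw [hsplit]
  exact (hc.integral_hasStrictDerivAt 0 x).hasDerivAt.const_add _

lemma tendsto_integral_Iic_atTop (hf : Integrable f) :
    Tendsto (fun x => ∫ s in Iic x, f s) atTop (𝓝 (∫ s, f s)) := by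
  have hIoi : Tendsto (fun x => ∫ s in Ioi x, f s) atTop (𝓝 0) :=
    tendsto_integral_Ioi_zero tendsto_id
  have hsub := hIoi.const_sub (∫ s, f s)
  rw [sub_zero] at hsub
  refine hsub.congr fun x => ?_
  rw [← intervalIntegral.integral_Iic_add_Ioi (b := x) hf.integrableOn hf.integrableOn,
    add_sub_cancel_right]

lemma integral_Iic_mem_Ioo (hf : Integrable f) (hpos : ∀ s, 0 < f s) (x : ℝ) :
    (∫ s in Iic x, f s) ∈ Ioo 0 (∫ s, f s) := by
  have pos_of_volume_pos {t : Set ℝ} (ht : 0 < volume t) : 0 < ∫ s in t, f s := by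
    rw [setIntegral_pos_iff_support_of_nonneg_ae (ae_of_all _ fun s => (hpos s).le)
      hf.integrableOn, Function.support_eq_univ fun s => (hpos s).ne']
    simpa using ht
  have hIic := pos_of_volume_pos (t := Iic x) (by simp)
  have hIoi := pos_of_volume_pos (t := Ioi x) (by simp)
  have hsum := intervalIntegral.integral_Iic_add_Ioi (b := x) hf.integrableOn hf.integrableOn
  exact ⟨hIic, by linarith⟩

end PrimitiveFromMinusInfinity

section FibreInequality

variable {h p θ : ℝ → ℝ} {κ : ℝ}

lemma tendsto_mul_cos_div_sin_atBot (hκ : κ ≠ 0) (hpos : ∀ y, 0 < h y)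
    (hh : ∀ y, HasDerivAt h (h y * p y) y) (hθ : ∀ y, HasDerivAt θ (κ * h y) y)
    (h_zero : Tendsto h atBot (𝓝 0)) (p_zero : Tendsto p atBot (𝓝 0)) {θ₀ : ℝ}
    (θ_lim : Tendsto θ atBot (𝓝 θ₀)) (hsin : Real.sin θ₀ = 0) :
    Tendsto (fun y => h y * Real.cos (θ y) / Real.sin (θ y)) atBot (𝓝 0) := by
  have hcos : Real.cos θ₀ ≠ 0 := fun hcos => by
    simpa [hsin, hcos] using Real.sin_sq_add_cos_sq θ₀
  have cos_lim : Tendsto (fun y => Real.cos (θ y)) atBot (𝓝 (Real.cos θ₀)) :=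
    (Real.continuous_cos.tendsto θ₀).comp θ_lim
  have sin_lim : Tendsto (fun y => Real.sin (θ y)) atBot (𝓝 0) := by
    rw [← hsin]
    exact (Real.continuous_sin.tendsto θ₀).comp θ_lim
  have quotient_lim : Tendsto (fun y => h y / Real.sin (θ y)) atBot (𝓝 0) := by
    refine HasDerivAt.lhopital_zero_atBot (.of_forall hh) (.of_forall fun y => (hθ y).sin)
      ?_ h_zero sin_lim ?_
    · filter_upwards [cos_lim.eventually_ne hcos] with y hy
      exact mul_ne_zero hy (mul_ne_zero hκ (hpos y).ne')
    · have := p_zero.div (cos_lim.mul_const κ) (mul_ne_zero hcos hκ)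
      rw [zero_div] at this
      refine this.congr fun y => ?_
      simp only [Pi.div_apply]
      rw [← mul_div_mul_left (p y) _ (hpos y).ne']
      ring_nf
  simpa [div_mul_eq_mul_div] using quotient_lim.mul cos_lim

lemma tendsto_mul_cos_div_sin_atTop (hκ : κ ≠ 0) (hpos : ∀ y, 0 < h y)
    (hh : ∀ y, HasDerivAt h (h y * p y) y) (hθ : ∀ y, HasDerivAt θ (κ * h y) y)
    (h_zero : Tendsto h atTop (𝓝 0)) (p_zero : Tendsto p atTop (𝓝 0)) {θ₀ : ℝ}
    (θ_lim : Tendsto θ atTop (𝓝 θ₀)) (hsin : Real.sin θ₀ = 0) :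
    Tendsto (fun y => h y * Real.cos (θ y) / Real.sin (θ y)) atTop (𝓝 0) := by
  have reflected := tendsto_mul_cos_div_sin_atBot (h := fun y => h (-y)) (p := fun y => -p (-y))
    (θ := fun y => θ (-y)) (neg_ne_zero.2 hκ) (fun y => hpos (-y))
    (fun y => ((hh (-y)).comp y (hasDerivAt_neg y)).congr_deriv (by ring))
    (fun y => ((hθ (-y)).comp y (hasDerivAt_neg y)).congr_deriv (by ring))
    (h_zero.comp tendsto_neg_atBot_atTop)
    (by simpa using (p_zero.comp tendsto_neg_atBot_atTop).neg)
    (θ_lim.comp tendsto_neg_atBot_atTop) hsin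
  simpa [Function.comp_def] using reflected.comp tendsto_neg_atTop_atBot

lemma hasDerivAt_mul_cos_div_sin {y : ℝ} (hh : HasDerivAt h (h y * p y) y)
    (hθ : HasDerivAt θ (κ * h y) y) (hsin : Real.sin (θ y) ≠ 0) :
    HasDerivAt (fun y => κ * (h y * Real.cos (θ y) / Real.sin (θ y)))
      (p y ^ 2 / 4 - κ ^ 2 * h y ^ 2
        - (p y / 2 - κ * h y * Real.cos (θ y) / Real.sin (θ y)) ^ 2) y := by
  refine (((hh.mul hθ.cos).div hθ.sin hsin).const_mul κ).congr_deriv ?_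
  simp only [Pi.mul_apply]
  field_simp
  ring

lemma sub_le_integral_of_tendsto_of_hasDerivAt_of_le {B B' g : ℝ → ℝ} {b₀ b₁ : ℝ}
    (hB : ∀ y, HasDerivAt B (B' y) y) (hle : ∀ y, B' y ≤ g y) (hg : Integrable g)
    (B_bot : Tendsto B atBot (𝓝 b₀)) (B_top : Tendsto B atTop (𝓝 b₁)) :
    b₁ - b₀ ≤ ∫ y, g y :=
  le_of_tendsto_of_tendsto (B_top.sub (B_bot.comp tendsto_neg_atTop_atBot))
    (intervalIntegral_tendsto_integral hg tendsto_neg_atTop_atBot tendsto_id)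
    ((eventually_ge_atTop 0).mono fun _ hL =>
      intervalIntegral.sub_le_integral_of_hasDeriv_right_of_le (neg_le_self hL)
        (fun y _ => (hB y).continuousAt.continuousWithinAt) (fun y _ => (hB y).hasDerivWithinAt)
        hg.integrableOn fun y _ => hle y)

lemma sq_mul_integral_sq_le_integral_sq_div_four (hpos : ∀ y, 0 < h y)
    (hh : ∀ y, HasDerivAt h (h y * p y) y) (h_int : Integrable h) (h_sq : MemLp h 2)
    (hp : MemLp p 2) (p_bot : Tendsto p atBot (𝓝 0)) (p_top : Tendsto p atTop (𝓝 0))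
    (hκ : 0 < κ) (hθ : ∀ y, HasDerivAt θ (κ * h y) y) (hθ_mem : ∀ y, θ y ∈ Ioo 0 π)
    (θ_bot : Tendsto θ atBot (𝓝 0)) (θ_top : Tendsto θ atTop (𝓝 π)) :
    κ ^ 2 * ∫ y, h y ^ 2 ≤ (∫ y, p y ^ 2) / 4 := by
  have hhp : Integrable fun y => h y * p y := h_sq.integrable_mul hp
  have h_bot : Tendsto h atBot (𝓝 0) := tendsto_zero_of_hasDerivAt_of_integrableOn_Iic (a := 0)
    (fun y _ => hh y) hhp.integrableOn h_int.integrableOn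
  have h_top : Tendsto h atTop (𝓝 0) := tendsto_zero_of_hasDerivAt_of_integrableOn_Ioi (a := 0)
    (fun y _ => hh y) hhp.integrableOn h_int.integrableOn
  have B_bot := (tendsto_mul_cos_div_sin_atBot hκ.ne' hpos hh hθ h_bot p_bot θ_bot
    Real.sin_zero).const_mul κ
  have B_top := (tendsto_mul_cos_div_sin_atTop hκ.ne' hpos hh hθ h_top p_top θ_top
    Real.sin_pi).const_mul κ
  have hp_sq := hp.integrable_sq.div_const 4
  have hκh_sq := h_sq.integrable_sq.const_mul (κ ^ 2)
  have hnonneg := sub_le_integral_of_tendsto_of_hasDerivAt_of_le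
    (fun y => hasDerivAt_mul_cos_div_sin (hh y) (hθ y)
      (Real.sin_pos_of_mem_Ioo (hθ_mem y)).ne')
    (fun y => sub_le_self _ (sq_nonneg _)) (hp_sq.sub hκh_sq) B_bot B_top
  rw [sub_self, integral_sub hp_sq hκh_sq, integral_div, integral_const_mul] at hnonneg
  exact sub_nonneg.1 hnonneg

/-- In the variable `θ = (π / ∫ h) ∫_{-∞}^y h ∈ (0, π)` this is Wirtinger's inequality for the
function `√h`, which vanishes at both ends. -/
theorem four_pi_sq_mul_integral_sq_le (hpos : ∀ y, 0 < h y)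
    (hh : ∀ y, HasDerivAt h (h y * p y) y) (h_int : Integrable h) (h_sq : MemLp h 2)
    (hp : MemLp p 2) (p_bot : Tendsto p atBot (𝓝 0)) (p_top : Tendsto p atTop (𝓝 0)) :
    4 * π ^ 2 * ∫ y, h y ^ 2 ≤ (∫ y, h y) ^ 2 * ∫ y, p y ^ 2 := by
  set ℓ := ∫ y, h y
  have hcont : Continuous h := continuous_iff_continuousAt.2 fun y => (hh y).continuousAt
  have hmem := integral_Iic_mem_Ioo h_int hpos
  have hℓ : 0 < ℓ := (hmem 0).1.trans (hmem 0).2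
  have hκ : 0 < π / ℓ := div_pos Real.pi_pos hℓ
  have hκℓ : π / ℓ * ℓ = π := div_mul_cancel₀ π hℓ.ne'
  have hθ_mem (y : ℝ) : π / ℓ * ∫ s in Iic y, h s ∈ Ioo 0 π :=
    ⟨mul_pos hκ (hmem y).1, (mul_lt_mul_of_pos_left (hmem y).2 hκ).trans_eq hκℓ⟩
  have θ_bot : Tendsto (fun y => π / ℓ * ∫ s in Iic y, h s) atBot (𝓝 0) := by
    simpa only [mul_zero, id] using
      (tendsto_integral_Iic_zero (f := h) tendsto_id).const_mul (π / ℓ)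
  have θ_top : Tendsto (fun y => π / ℓ * ∫ s in Iic y, h s) atTop (𝓝 π) := by
    conv_rhs => rw [← hκℓ]
    exact (tendsto_integral_Iic_atTop h_int).const_mul (π / ℓ)
  have hwirtinger := sq_mul_integral_sq_le_integral_sq_div_four hpos hh h_int h_sq hp p_bot p_top
    hκ (fun y => (hasDerivAt_integral_Iic h_int hcont y).const_mul _) hθ_mem θ_bot θ_top
  calc 4 * π ^ 2 * ∫ y, h y ^ 2 = 4 * ℓ ^ 2 * ((π / ℓ) ^ 2 * ∫ y, h y ^ 2) := by
        field_simp
    _ ≤ 4 * ℓ ^ 2 * ((∫ y, p y ^ 2) / 4) := by gcongr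
    _ = ℓ ^ 2 * ∫ y, p y ^ 2 := by ring

lemma two_mul_integral_mul_sub_le {q h : ℝ → ℝ} (hq : MemLp q 2) (hh : MemLp h 2) (k : ℝ) :
    2 * k * (∫ y, q y * h y) - k ^ 2 * (∫ y, h y ^ 2) ≤ ∫ y, q y ^ 2 := by
  have hqh : Integrable fun y => 2 * k * (q y * h y) := (hq.integrable_mul hh).const_mul (2 * k)
  have hhh := hh.integrable_sq.const_mul (k ^ 2)
  calc 2 * k * (∫ y, q y * h y) - k ^ 2 * (∫ y, h y ^ 2)
      = ∫ y, (2 * k * (q y * h y) - k ^ 2 * h y ^ 2) := by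
        rw [integral_sub hqh hhh, integral_const_mul, integral_const_mul]
    _ ≤ ∫ y, q y ^ 2 := integral_mono (hqh.sub hhh) hq.integrable_sq fun y => by
        linarith [sq_nonneg (q y - k * h y)]

end FibreInequality

section Calibration

/-- The length of the vertical line of `ℝ²` that cuts off area `m` on its left, for the round
metric of total area `N`, as a function of `m`. -/
noncomputable def extremalLength (N m : ℝ) : ℝ := 2 * √(π * m * (N - m) / N)

/-- The derivative of `extremalLength N` at `m`. -/
noncomputable def extremalSlope (N m : ℝ) : ℝ := 2 * π * (N - 2 * m) / (N * extremalLength N m)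

/-- The calibration: for a conformal metric of total area `N`, evaluated at the area `m` to the left
of a vertical line and at the length `φ` of that line, it grows, as the line moves to the right,
at most at the rate of the Dirichlet energy, with equality for the round metric. -/
noncomputable def calibration (N m φ : ℝ) : ℝ :=
  2 * π * (Real.log m - Real.log (N - m)) + 4 * π * m / N + 2 * extremalSlope N m * φ

variable {N m : ℝ}

lemma extremalLength_pos (hm : m ∈ Ioo 0 N) : 0 < extremalLength N m := by
  have hN : 0 < N := hm.1.trans hm.2
  have hNm : 0 < N - m := sub_pos.2 hm.2
  have hm0 : 0 < m := hm.1
  unfold extremalLength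
  positivity

lemma extremalLength_sq (hm : m ∈ Ioo 0 N) :
    extremalLength N m ^ 2 = 4 * π * m * (N - m) / N := by
  have hN : 0 < N := hm.1.trans hm.2
  have hNm : 0 < N - m := sub_pos.2 hm.2
  have hm0 : 0 < m := hm.1
  rw [extremalLength, mul_pow, Real.sq_sqrt (by positivity)]
  ring

lemma hasDerivAt_extremalLength (hm : m ∈ Ioo 0 N) :
    HasDerivAt (extremalLength N) (extremalSlope N m) m := by
  have hN : 0 < N := hm.1.trans hm.2
  have hpos := extremalLength_pos hm
  have hquot : HasDerivAt (fun m => π * m * (N - m) / N) (π * (N - 2 * m) / N) m :=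
    ((((hasDerivAt_id' m).const_mul π).mul ((hasDerivAt_id' m).const_sub N)).div_const
      N).congr_deriv (by ring)
  have hradicand : π * m * (N - m) / N ≠ 0 := fun h => by simp [extremalLength, h] at hpos
  refine ((hquot.sqrt hradicand).const_mul 2).congr_deriv ?_
  unfold extremalSlope extremalLength
  field_simp

lemma extremalSlope_sq (hm : m ∈ Ioo 0 N) :
    extremalSlope N m ^ 2 = 4 * π ^ 2 / extremalLength N m ^ 2 - 4 * π / N := by
  have hN : 0 < N := hm.1.trans hm.2
  have hNm : 0 < N - m := sub_pos.2 hm.2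
  have hm0 : 0 < m := hm.1
  rw [extremalSlope, div_pow, mul_pow N, extremalLength_sq hm]
  field_simp
  ring

lemma hasDerivAt_extremalSlope (hm : m ∈ Ioo 0 N) :
    HasDerivAt (extremalSlope N) (-(4 * π ^ 2 / extremalLength N m ^ 3)) m := by
  have hN : 0 < N := hm.1.trans hm.2
  have hβ := extremalLength_pos hm
  have hnum : HasDerivAt (fun m => 2 * π * (N - 2 * m)) (-(4 * π)) m :=
    ((((hasDerivAt_id' m).const_mul 2).const_sub N).const_mul (2 * π)).congr_deriv (by ring)
  have hquot := hnum.div ((hasDerivAt_extremalLength hm).const_mul N)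
    (mul_ne_zero hN.ne' hβ.ne')
  refine hquot.congr_deriv ?_
  have hslope : 2 * π * (N - 2 * m) = extremalSlope N m * (N * extremalLength N m) := by
    rw [extremalSlope]
    field_simp
  have hsq := extremalSlope_sq hm
  rw [hslope]
  field_simp at hsq ⊢
  linear_combination -hsq

lemma three_div_sq_sub_le {a b : ℝ} (ha : 0 < a) (hb : 0 < b) :
    3 / b ^ 2 - 2 * a / b ^ 3 ≤ 1 / a ^ 2 := by
  have hfactor : 1 / a ^ 2 - (3 / b ^ 2 - 2 * a / b ^ 3) =
      (a - b) ^ 2 * (2 * a + b) / (a ^ 2 * b ^ 3) := by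
    field_simp
    ring
  have : 0 ≤ (a - b) ^ 2 * (2 * a + b) / (a ^ 2 * b ^ 3) := by positivity
  linarith

lemma hasDerivAt_calibration {a φ : ℝ → ℝ} {a' φ' x : ℝ} (hm : a x ∈ Ioo 0 N)
    (ha : HasDerivAt a a' x) (hφ : HasDerivAt φ φ' x) :
    HasDerivAt (fun x => calibration N (a x) (φ x))
      (4 * π ^ 2 * a' * (3 / extremalLength N (a x) ^ 2 - 2 * φ x / extremalLength N (a x) ^ 3) +
        (2 * extremalSlope N (a x) * φ' - extremalSlope N (a x) ^ 2 * a')) x := by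
  have hNm : 0 < N - a x := sub_pos.2 hm.2
  have hax : 0 < a x := hm.1
  have hβ := extremalLength_pos hm
  have hderiv := ((((ha.log hax.ne').sub ((ha.const_sub N).log hNm.ne')).const_mul
    (2 * π)).add ((ha.const_mul (4 * π)).div_const N)).add
    ((((hasDerivAt_extremalSlope hm).comp x ha).const_mul 2).mul hφ)
  refine hderiv.congr_deriv ?_
  have hlog : a' / a x - -a' / (N - a x) = 4 * π * a' / extremalLength N (a x) ^ 2 := by
    rw [extremalLength_sq hm]
    field_simp
    ring
  have hslope : 4 * π * a' / N =
      4 * π ^ 2 * a' / extremalLength N (a x) ^ 2 - extremalSlope N (a x) ^ 2 * a' := by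
    rw [extremalSlope_sq hm]
    ring
  simp only [Function.comp_apply]
  rw [hlog, hslope]
  field_simp
  ring

/-- The extremal slope plays the role of the multiplier in the Cauchy–Schwarz inequality for `φ'`,
and `1 / φ²` lies above its tangent at the extremal length. -/
theorem calibration_sub_le_integral {a a' φ φ' E : ℝ → ℝ} (hm : ∀ x, a x ∈ Ioo 0 N)
    (ha : ∀ x, HasDerivAt a (a' x) x) (ha' : ∀ x, 0 ≤ a' x)
    (hφ : ∀ x, HasDerivAt φ (φ' x) x) (φ_pos : ∀ x, 0 < φ x)
    (hE : ∀ x k, 4 * π ^ 2 * a' x / φ x ^ 2 + (2 * k * φ' x - k ^ 2 * a' x) ≤ E x)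
    {x₀ x₁ : ℝ} (hle : x₀ ≤ x₁) (hE_int : IntegrableOn E (Icc x₀ x₁)) :
    calibration N (a x₁) (φ x₁) - calibration N (a x₀) (φ x₀) ≤ ∫ x in x₀..x₁, E x := by
  have hQ (x : ℝ) := hasDerivAt_calibration (hm x) (ha x) (hφ x)
  refine intervalIntegral.sub_le_integral_of_hasDeriv_right_of_le hle
    (fun x _ => (hQ x).continuousAt.continuousWithinAt) (fun x _ => (hQ x).hasDerivWithinAt)
    hE_int fun x _ => le_trans ?_ (hE x (extremalSlope N (a x)))
  have htangent := three_div_sq_sub_le (φ_pos x) (extremalLength_pos (hm x))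
  rw [← mul_one_div (4 * π ^ 2 * a' x)]
  have harea : 0 ≤ 4 * π ^ 2 * a' x := mul_nonneg (by positivity) (ha' x)
  gcongr

end Calibration

section RoundFibre

lemma tendsto_div_add_sq_cocompact (a : ℝ) (ha : 0 ≤ a) :
    Tendsto (fun y => y / (a + y ^ 2)) (cocompact ℝ) (𝓝 0) := by
  have hinv : Tendsto (fun y : ℝ => ‖y⁻¹‖) (cocompact ℝ) (𝓝 0) := by
    rw [← Metric.cobounded_eq_cocompact]
    simpa only [norm_zero] using (tendsto_inv₀_cobounded (α := ℝ)).norm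
  refine squeeze_zero_norm (fun y => ?_) hinv
  rcases eq_or_ne y 0 with rfl | hy
  · simp
  · rw [norm_div, norm_inv, Real.norm_of_nonneg (by positivity : 0 ≤ a + y ^ 2), inv_eq_one_div,
      div_le_div_iff₀ (by positivity) (norm_pos_iff.2 hy), Real.norm_eq_abs, ← sq, sq_abs]
    linarith

variable {A : ℝ}

lemma inv_sq_add_sq_eq (hA : 0 < A) (y : ℝ) :
    (A ^ 2 + y ^ 2)⁻¹ = (A ^ 2)⁻¹ * (1 + (y / A) ^ 2)⁻¹ := by
  field_simp

lemma integrable_inv_sq_add_sq (hA : 0 < A) : Integrable fun y => (A ^ 2 + y ^ 2)⁻¹ := by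
  simp only [inv_sq_add_sq_eq hA]
  exact (integrable_inv_one_add_sq.comp_div hA.ne').const_mul _

lemma integral_inv_sq_add_sq (hA : 0 < A) : ∫ y, (A ^ 2 + y ^ 2)⁻¹ = π / A := by
  simp only [inv_sq_add_sq_eq hA]
  rw [integral_const_mul, Measure.integral_comp_div (fun y => (1 + y ^ 2)⁻¹),
    integral_univ_inv_one_add_sq, abs_of_pos hA, smul_eq_mul]
  field_simp

lemma integrable_inv_sq_add_sq_sq (hA : 0 < A) : Integrable fun y => ((A ^ 2 + y ^ 2) ^ 2)⁻¹ := by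
  refine ((integrable_inv_sq_add_sq hA).const_mul (A ^ 2)⁻¹).mono'
    (by fun_prop (disch := intros; positivity)) (.of_forall fun y => ?_)
  rw [Real.norm_of_nonneg (by positivity), sq (A ^ 2 + y ^ 2), mul_inv]
  gcongr
  exact le_add_of_nonneg_right (sq_nonneg y)

lemma integral_inv_sq_add_sq_sq (hA : 0 < A) :
    ∫ y, ((A ^ 2 + y ^ 2) ^ 2)⁻¹ = π / (2 * A ^ 3) := by
  have hderiv (y : ℝ) : HasDerivAt (fun y => y / (A ^ 2 + y ^ 2))
      (2 * A ^ 2 * ((A ^ 2 + y ^ 2) ^ 2)⁻¹ - (A ^ 2 + y ^ 2)⁻¹) y := by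
    refine ((hasDerivAt_id' y).div ((hasDerivAt_pow 2 y).const_add (A ^ 2))
      (by positivity)).congr_deriv ?_
    field_simp
    ring
  have hsq := (integrable_inv_sq_add_sq_sq hA).const_mul (2 * A ^ 2)
  have hlim := tendsto_div_add_sq_cocompact (A ^ 2) (sq_nonneg A)
  have hzero := integral_of_hasDerivAt_of_tendsto hderiv (hsq.sub (integrable_inv_sq_add_sq hA))
    (hlim.mono_left atBot_le_cocompact) (hlim.mono_left atTop_le_cocompact)
  rw [integral_sub hsq (integrable_inv_sq_add_sq hA), integral_const_mul,
    integral_inv_sq_add_sq hA] at hzero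
  field_simp at hzero ⊢
  linarith

end RoundFibre

section SphericalCap

lemma hasDerivAt_div_sqrt_one_add_sq (x : ℝ) :
    HasDerivAt (fun x => x / √(1 + x ^ 2)) (1 / √(1 + x ^ 2) ^ 3) x := by
  simp only [← Real.sin_arctan]
  refine (Real.hasDerivAt_arctan x).sin.congr_deriv ?_
  rw [Real.cos_arctan, div_mul_div_comm, mul_one]
  congr 1
  rw [pow_succ' √(1 + x ^ 2), Real.sq_sqrt (by positivity)]

lemma tendsto_div_sqrt_one_add_sq :
    Tendsto (fun x : ℝ => x / √(1 + x ^ 2)) atTop (𝓝 1) := by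
  simp only [← Real.sin_arctan]
  rw [← Real.sin_pi_div_two]
  exact (Real.continuous_sin.tendsto _).comp
    (Real.tendsto_arctan_atTop.mono_right nhdsWithin_le_nhds)

lemma div_sqrt_one_add_sq_lt_one (x : ℝ) : x / √(1 + x ^ 2) < 1 := by
  rw [← Real.tanh_arsinh]
  exact Real.tanh_lt_one _

/-- The area of `{p : ℝ² | R < p 0}` for the metric `|dp|² / (1 + |p|²)²`, the round metric of total
area `π`. -/
noncomputable def capArea (R : ℝ) : ℝ := π / 2 * (1 - R / √(1 + R ^ 2))

lemma capArea_pos (R : ℝ) : 0 < capArea R :=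
  mul_pos Real.pi_div_two_pos (sub_pos.2 (div_sqrt_one_add_sq_lt_one R))

lemma tendsto_capArea : Tendsto capArea atTop (𝓝 0) := by
  unfold capArea
  simpa using (tendsto_div_sqrt_one_add_sq.const_sub 1).const_mul (π / 2)

lemma integral_Ioi_fibreArea_round (R : ℝ) :
    ∫ x in Ioi R, π / (2 * √(1 + x ^ 2) ^ 3) = capArea R := by
  have hderiv (x : ℝ) : HasDerivAt (fun x => π / 2 * (x / √(1 + x ^ 2)))
      (π / (2 * √(1 + x ^ 2) ^ 3)) x :=
    ((hasDerivAt_div_sqrt_one_add_sq x).const_mul (π / 2)).congr_deriv (by field_simp)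
  rw [integral_Ioi_of_hasDerivAt_of_nonneg' (fun x _ => hderiv x) (fun x _ => by positivity)
    (tendsto_div_sqrt_one_add_sq.const_mul (π / 2)), capArea]
  ring

lemma integral_fibreEnergy_round (R : ℝ) :
    ∫ x in (-R)..R, (4 * π / √(1 + x ^ 2) - 2 * π / √(1 + x ^ 2) ^ 3) =
      8 * π * Real.arsinh R - 4 * π * (R / √(1 + R ^ 2)) := by
  have hderiv (x : ℝ) : HasDerivAt (fun x => 4 * π * Real.arsinh x - 2 * π * (x / √(1 + x ^ 2)))
      (4 * π / √(1 + x ^ 2) - 2 * π / √(1 + x ^ 2) ^ 3) x :=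
    (((Real.hasDerivAt_arsinh x).const_mul (4 * π)).sub
      ((hasDerivAt_div_sqrt_one_add_sq x).const_mul (2 * π))).congr_deriv (by ring)
  rw [intervalIntegral.integral_eq_sub_of_hasDerivAt (fun x _ => hderiv x)
    (Continuous.intervalIntegrable (by fun_prop (disch := intros; positivity)) _ _),
    Real.arsinh_neg, neg_sq]
  ring

lemma log_capArea_add_two_mul_arsinh (R : ℝ) :
    Real.log (capArea R) + 2 * Real.arsinh R = Real.log (π / 2 * (1 + R / √(1 + R ^ 2))) := by
  have hA_sq : √(1 + R ^ 2) ^ 2 = 1 + R ^ 2 := Real.sq_sqrt (by positivity)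
  rw [← Real.log_exp (2 * Real.arsinh R), ← Real.log_mul (capArea_pos R).ne' (Real.exp_ne_zero _),
    two_mul, Real.exp_add, Real.exp_arsinh, capArea]
  congr 1
  field_simp
  linear_combination (R + √(1 + R ^ 2)) * hA_sq

variable {N : ℝ}

lemma extremalSlope_capArea_mul {R : ℝ} (hm : capArea R ∈ Ioo 0 N) :
    extremalSlope N (capArea R) * (π / √(1 + R ^ 2)) = 2 * π * (1 - 2 * capArea R / N) *
      √((1 + R / √(1 + R ^ 2)) / (2 * (1 - capArea R / N))) := by
  have hN : 0 < N := hm.1.trans hm.2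
  have hβ := extremalLength_pos hm
  have hratio : 0 < 1 - capArea R / N := sub_pos.2 ((div_lt_one hN).2 hm.2)
  have hA_sq : √(1 + R ^ 2) ^ 2 = 1 + R ^ 2 := Real.sq_sqrt (by positivity)
  have hlength : π / √(1 + R ^ 2) = extremalLength N (capArea R) *
      √((1 + R / √(1 + R ^ 2)) / (2 * (1 - capArea R / N))) := by
    have hradicand : π * capArea R * (N - capArea R) / N *
        ((1 + R / √(1 + R ^ 2)) / (2 * (1 - capArea R / N))) = (π / (2 * √(1 + R ^ 2))) ^ 2 := by
      have hsub : N - capArea R = N * (1 - capArea R / N) := by field_simp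
      rw [hsub]
      generalize 1 - capArea R / N = q at *
      unfold capArea
      field_simp
      linear_combination hA_sq
    rw [extremalLength, mul_assoc, ← Real.sqrt_mul
      (div_nonneg (mul_nonneg (mul_nonneg Real.pi_nonneg hm.1.le) (sub_nonneg.2 hm.2.le)) hN.le),
      hradicand, Real.sqrt_sq (by positivity)]
    field_simp
  rw [hlength, extremalSlope]
  field_simp

lemma calibration_sub_calibration_eq (hN : N ≠ 0) (m φ : ℝ) :
    calibration N (N - m) φ - calibration N m φ =
      4 * π * (Real.log (N - m) - Real.log m + (1 - 2 * m / N)) - 4 * (extremalSlope N m * φ) := by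
  have hlength : extremalLength N (N - m) = extremalLength N m := by
    unfold extremalLength
    ring_nf
  have hslope : extremalSlope N (N - m) = -extremalSlope N m := by
    rw [extremalSlope, extremalSlope, hlength]
    ring
  rw [calibration, calibration, hslope]
  field_simp
  ring_nf

lemma tendsto_calibration_sub_fibreEnergy_round (hN : 0 < N) :
    Tendsto (fun R => calibration N (N - capArea R) (π / √(1 + R ^ 2)) -
        calibration N (capArea R) (π / √(1 + R ^ 2)) -
        (8 * π * Real.arsinh R - 4 * π * (R / √(1 + R ^ 2))))
      atTop (𝓝 (4 * π * (Real.log N - Real.log π))) := by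
  set c : ℝ → ℝ := fun R => R / √(1 + R ^ 2)
  have hc : Tendsto c atTop (𝓝 1) := tendsto_div_sqrt_one_add_sq
  have hδ := tendsto_capArea
  have hlogN : Tendsto (fun R => Real.log (N - capArea R)) atTop (𝓝 (Real.log N)) := by
    simpa using (hδ.const_sub N).log (by simpa using hN.ne')
  have hlogπ : Tendsto (fun R => Real.log (π / 2 * (1 + c R))) atTop (𝓝 (Real.log π)) := by
    have hπ : π / 2 * (1 + 1) = π := by ring
    have := (hc.const_add 1).const_mul (π / 2)
    rw [hπ] at this
    exact this.log Real.pi_ne_zero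
  have hratio : Tendsto (fun R => 2 * capArea R / N) atTop (𝓝 0) := by
    simpa using (hδ.const_mul 2).div_const N
  have hslope : Tendsto (fun R => 2 * π * (1 - 2 * capArea R / N) *
      √((1 + c R) / (2 * (1 - capArea R / N)))) atTop (𝓝 (2 * π)) := by
    have := ((hratio.const_sub 1).const_mul (2 * π)).mul
      ((hc.const_add 1).div (((hδ.div_const N).const_sub 1).const_mul 2) (by norm_num)).sqrt
    norm_num at this
    exact this
  have hlim := ((((hlogN.sub hlogπ).add (hratio.const_sub 1)).add hc).const_mul (4 * π)).sub
    (hslope.const_mul 4)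
  rw [show 4 * π * (Real.log N - Real.log π + (1 - 0) + 1) - 4 * (2 * π) =
    4 * π * (Real.log N - Real.log π) by ring] at hlim
  refine hlim.congr' ?_
  filter_upwards [hδ.eventually_lt_const hN] with R hR
  rw [calibration_sub_calibration_eq hN.ne', extremalSlope_capArea_mul ⟨capArea_pos R, hR⟩,
    ← log_capArea_add_two_mul_arsinh]
  ring

end SphericalCap

local notation "ℝ²" => EuclideanSpace ℝ (Fin 2)

section Plane

/-- The `i`-th partial derivative of a function on the plane. -/
noncomputable def partialDeriv (i : Fin 2) (f : ℝ² → ℝ) (p : ℝ²) : ℝ :=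
  fderiv ℝ f p (EuclideanSpace.single i 1)

/-- The squared Euclidean norm of the gradient of a function on the plane. -/
noncomputable def gradSq (f : ℝ² → ℝ) (p : ℝ²) : ℝ := ∑ i, partialDeriv i f p ^ 2

/-- The integral of `f` over the vertical line through `(x, 0)`, as a function of `x`. -/
noncomputable def fibreIntegral (f : ℝ² → ℝ) (x : ℝ) : ℝ := ∫ y, f !₂[x, y]

/-- The conformal factor of the round metric on the plane: that metric is `roundFactor ^ 2 |dp|²`,
and its total area is `π`. -/
noncomputable def roundFactor (p : ℝ²) : ℝ := (1 + ‖p‖ ^ 2)⁻¹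

lemma measurePreserving_pair : MeasurePreserving fun p : ℝ × ℝ => (!₂[p.1, p.2] : ℝ²) :=
  (PiLp.volume_preserving_toLp (Fin 2)).comp (volume_preserving_finTwoArrow ℝ).symm

lemma measurableEmbedding_pair : MeasurableEmbedding fun p : ℝ × ℝ => (!₂[p.1, p.2] : ℝ²) :=
  (MeasurableEquiv.toLp 2 _).measurableEmbedding.comp
    (MeasurableEquiv.finTwoArrow (α := ℝ)).symm.measurableEmbedding

lemma integrable_fibreIntegral {f : ℝ² → ℝ} (hf : Integrable f) :
    Integrable (fibreIntegral f) :=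
  ((measurePreserving_pair.integrable_comp_emb measurableEmbedding_pair).2 hf).integral_prod_left

lemma integral_fibreIntegral {f : ℝ² → ℝ} (hf : Integrable f) :
    ∫ x, fibreIntegral f x = ∫ p, f p := by
  rw [← measurePreserving_pair.integral_comp measurableEmbedding_pair]
  exact (integral_prod (fun p : ℝ × ℝ => f !₂[p.1, p.2])
    ((measurePreserving_pair.integrable_comp_emb measurableEmbedding_pair).2 hf)).symm

lemma pair_eq_add_smul (x y : ℝ) :
    (!₂[x, y] : ℝ²) = x • EuclideanSpace.single 0 1 + y • EuclideanSpace.single 1 1 := by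
  ext i
  fin_cases i <;> simp

lemma continuous_pair_left (y : ℝ) : Continuous fun x => (!₂[x, y] : ℝ²) := by
  simp only [pair_eq_add_smul]
  fun_prop

lemma continuous_pair_right (x : ℝ) : Continuous fun y => (!₂[x, y] : ℝ²) := by
  simp only [pair_eq_add_smul]
  fun_prop

lemma hasDerivAt_pair_left {f : ℝ² → ℝ} (hf : Differentiable ℝ f) (x y : ℝ) :
    HasDerivAt (fun x => f !₂[x, y]) (partialDeriv 0 f !₂[x, y]) x := by
  have hpair : HasDerivAt (fun x => (!₂[x, y] : ℝ²)) (EuclideanSpace.single 0 1) x := by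
    simp only [pair_eq_add_smul]
    simpa using ((hasDerivAt_id' x).smul_const (EuclideanSpace.single 0 1 : ℝ²)).add_const
      (y • EuclideanSpace.single 1 1)
  exact (hf !₂[x, y]).hasFDerivAt.comp_hasDerivAt x hpair

lemma hasDerivAt_pair_right {f : ℝ² → ℝ} (hf : Differentiable ℝ f) (x y : ℝ) :
    HasDerivAt (fun y => f !₂[x, y]) (partialDeriv 1 f !₂[x, y]) y := by
  have hpair : HasDerivAt (fun y => (!₂[x, y] : ℝ²)) (EuclideanSpace.single 1 1) y := by
    simp only [pair_eq_add_smul]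
    simpa using ((hasDerivAt_id' y).smul_const (EuclideanSpace.single 1 1 : ℝ²)).const_add
      (x • EuclideanSpace.single 0 1)
  exact (hf !₂[x, y]).hasFDerivAt.comp_hasDerivAt y hpair

lemma continuous_partialDeriv {f : ℝ² → ℝ} (hf : ContDiff ℝ 1 f) (i : Fin 2) :
    Continuous (partialDeriv i f) :=
  (hf.continuous_fderiv one_ne_zero).clm_apply continuous_const

lemma roundFactor_pos (p : ℝ²) : 0 < roundFactor p := by
  unfold roundFactor
  positivity

lemma roundFactor_le_one (p : ℝ²) : roundFactor p ≤ 1 :=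
  inv_le_one_of_one_le₀ (le_add_of_nonneg_right (sq_nonneg ‖p‖))

lemma contDiff_roundFactor : ContDiff ℝ 1 roundFactor :=
  (contDiff_const.add (contDiff_norm_sq ℝ)).inv fun p => by positivity

lemma roundFactor_pair (x y : ℝ) :
    roundFactor !₂[x, y] = (√(1 + x ^ 2) ^ 2 + y ^ 2)⁻¹ := by
  rw [Real.sq_sqrt (by positivity), roundFactor, EuclideanSpace.norm_sq_eq, Fin.sum_univ_two,
    ← add_assoc]
  simp

end Plane

section FibreIntegral

variable {f : ℝ² → ℝ}

lemma exists_norm_pair_le (hf : f =O[⊤] roundFactor) :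
    ∃ C, ∀ x y, ‖f !₂[x, y]‖ ≤ C * (1 + y ^ 2)⁻¹ := by
  obtain ⟨C, hC, hbound⟩ := Asymptotics.isBigO_iff'.1 hf
  refine ⟨C, fun x y => (eventually_top.1 hbound _).trans ?_⟩
  rw [roundFactor_pair, Real.sq_sqrt (by positivity), Real.norm_of_nonneg (by positivity)]
  gcongr
  exact le_add_of_nonneg_right (sq_nonneg x)

lemma integrable_pair (hc : Continuous f) (hf : f =O[⊤] roundFactor) (x : ℝ) :
    Integrable fun y => f !₂[x, y] := by
  obtain ⟨C, hC⟩ := exists_norm_pair_le hf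
  exact (integrable_inv_one_add_sq.const_mul C).mono'
    (hc.comp (continuous_pair_right x)).aestronglyMeasurable (.of_forall (hC x))

lemma tendsto_pair_cocompact (hf : f =O[⊤] roundFactor) (x : ℝ) :
    Tendsto (fun y => f !₂[x, y]) (cocompact ℝ) (𝓝 0) := by
  obtain ⟨C, hC⟩ := exists_norm_pair_le hf
  have hinv : Tendsto (fun y : ℝ => (1 + y ^ 2)⁻¹) (cocompact ℝ) (𝓝 0) := by
    have hsq := (tendsto_pow_atTop two_ne_zero).comp (tendsto_norm_cocompact_atTop (E := ℝ))
    simpa only [Function.comp_def, Real.norm_eq_abs, sq_abs] using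
      tendsto_inv_atTop_zero.comp (tendsto_atTop_add_const_left _ 1 hsq)
  exact squeeze_zero_norm (hC x) (by simpa using hinv.const_mul C)

lemma continuous_fibreIntegral (hc : Continuous f) (hf : f =O[⊤] roundFactor) :
    Continuous (fibreIntegral f) := by
  obtain ⟨C, hC⟩ := exists_norm_pair_le hf
  exact continuous_of_dominated
    (fun x => (hc.comp (continuous_pair_right x)).aestronglyMeasurable)
    (fun x => .of_forall (hC x)) (integrable_inv_one_add_sq.const_mul C)
    (.of_forall fun y => hc.comp (continuous_pair_left y))

lemma hasDerivAt_fibreIntegral (hc : ContDiff ℝ 1 f) (hf : f =O[⊤] roundFactor)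
    (hf' : partialDeriv 0 f =O[⊤] roundFactor) (x : ℝ) :
    HasDerivAt (fibreIntegral f) (fibreIntegral (partialDeriv 0 f) x) x := by
  obtain ⟨C, hC⟩ := exists_norm_pair_le hf'
  exact (hasDerivAt_integral_of_dominated_loc_of_deriv_le univ_mem
    (.of_forall fun x => (hc.continuous.comp (continuous_pair_right x)).aestronglyMeasurable)
    (integrable_pair hc.continuous hf x)
    ((continuous_partialDeriv hc 0).comp (continuous_pair_right x)).aestronglyMeasurable
    (.of_forall fun y x _ => hC x y) (integrable_inv_one_add_sq.const_mul C)
    (.of_forall fun y x _ => hasDerivAt_pair_left (hc.differentiable one_ne_zero) x y)).2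

lemma fibreIntegral_pos (hc : Continuous f) (hf : f =O[⊤] roundFactor) (hpos : ∀ p, 0 < f p)
    (x : ℝ) : 0 < fibreIntegral f x :=
  (integral_pos_iff_support_of_nonneg (fun _ => (hpos _).le) (integrable_pair hc hf x)).2 <| by
    rw [Function.support_eq_univ fun _ => (hpos _).ne']
    simp

lemma isBigO_roundFactor_of_hasCompactSupport (hc : Continuous f) (hf : HasCompactSupport f) :
    f =O[⊤] roundFactor := by
  obtain ⟨C, hC⟩ := (hf.mul_left (f := fun p => 1 + ‖p‖ ^ 2)).exists_bound_of_continuous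
    (by fun_prop)
  refine Asymptotics.isBigO_top.2 ⟨C, fun p => ?_⟩
  have hp : 0 < 1 + ‖p‖ ^ 2 := by positivity
  rw [Real.norm_of_nonneg (roundFactor_pos p).le, roundFactor, ← div_eq_mul_inv,
    le_div_iff₀ hp, mul_comm]
  simpa only [Pi.mul_apply, norm_mul, Real.norm_of_nonneg hp.le] using hC p

end FibreIntegral

section ConformalFactor

/-- The logarithm of the conformal factor `e^{u/2} roundFactor` of the metric that is `e^u` times
the round one. -/
noncomputable def logFactor (u : ℝ² → ℝ) (p : ℝ²) : ℝ := u p / 2 - Real.log (1 + ‖p‖ ^ 2)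

/-- The conformal factor of the metric that is `e^u` times the round one. -/
noncomputable def confFactor (u : ℝ² → ℝ) (p : ℝ²) : ℝ := Real.exp (logFactor u p)

/-- What `u` contributes to the Dirichlet energy density of `logFactor u`. -/
noncomputable def energyExcess (u : ℝ² → ℝ) (p : ℝ²) : ℝ :=
  gradSq u p / 4 - 2 * ∑ i, p i * roundFactor p * partialDeriv i u p

variable {u : ℝ² → ℝ}

lemma confFactor_pos (p : ℝ²) : 0 < confFactor u p := Real.exp_pos _

lemma confFactor_eq (p : ℝ²) : confFactor u p = Real.exp (u p / 2) * roundFactor p := by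
  rw [confFactor, logFactor, Real.exp_sub, Real.exp_log (by positivity)]
  rfl

lemma contDiff_logFactor (hu : ContDiff ℝ 1 u) : ContDiff ℝ 1 (logFactor u) :=
  (hu.div_const 2).sub ((contDiff_const.add (contDiff_norm_sq ℝ)).log fun p => by positivity)

lemma contDiff_confFactor (hu : ContDiff ℝ 1 u) : ContDiff ℝ 1 (confFactor u) :=
  (contDiff_logFactor hu).exp

lemma hasFDerivAt_one_add_norm_sq (p : ℝ²) :
    HasFDerivAt (fun p : ℝ² => 1 + ‖p‖ ^ 2) (2 • innerSL ℝ p) p :=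
  (hasStrictFDerivAt_norm_sq p).hasFDerivAt.const_add 1

lemma partialDeriv_logFactor (hu : ContDiff ℝ 1 u) (i : Fin 2) (p : ℝ²) :
    partialDeriv i (logFactor u) p = partialDeriv i u p / 2 - 2 * (p i * roundFactor p) := by
  have hlog : HasFDerivAt (logFactor u) _ p :=
    ((hu.differentiable one_ne_zero p).hasFDerivAt.mul_const (2⁻¹ : ℝ)).sub
      ((hasFDerivAt_one_add_norm_sq p).log (by positivity))
  rw [partialDeriv, hlog.fderiv]
  simp only [partialDeriv, roundFactor, sub_apply, smul_apply, smul_eq_mul, coe_innerSL_apply,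
    EuclideanSpace.inner_single_right, Real.ringHom_apply, one_mul, nsmul_eq_mul, Nat.cast_ofNat]
  ring

lemma partialDeriv_confFactor (hu : ContDiff ℝ 1 u) (i : Fin 2) (p : ℝ²) :
    partialDeriv i (confFactor u) p = partialDeriv i (logFactor u) p * confFactor u p := by
  have hexp : HasFDerivAt (confFactor u) _ p :=
    ((contDiff_logFactor hu).differentiable one_ne_zero p).hasFDerivAt.exp
  rw [partialDeriv, hexp.fderiv, mul_comm]
  rfl

lemma norm_sq_mul_roundFactor (p : ℝ²) :
    (p 0 ^ 2 + p 1 ^ 2) * roundFactor p = 1 - roundFactor p := by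
  rw [roundFactor, EuclideanSpace.real_norm_sq_eq, Fin.sum_univ_two]
  have : 0 < 1 + (p 0 ^ 2 + p 1 ^ 2) := by positivity
  field_simp
  ring

lemma gradSq_logFactor (hu : ContDiff ℝ 1 u) (p : ℝ²) :
    gradSq (logFactor u) p = 4 * (roundFactor p - roundFactor p ^ 2) + energyExcess u p := by
  simp only [energyExcess, gradSq, partialDeriv_logFactor hu, Fin.sum_univ_two]
  linear_combination 4 * roundFactor p * norm_sq_mul_roundFactor p

lemma hasCompactSupport_partialDeriv (hc : HasCompactSupport u) (i : Fin 2) :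
    HasCompactSupport (partialDeriv i u) :=
  hc.fderiv_apply ℝ _

lemma continuous_gradSq (hu : ContDiff ℝ 1 u) : Continuous (gradSq u) :=
  continuous_finsetSum _ fun i _ => (continuous_partialDeriv hu i).pow 2

lemma hasCompactSupport_gradSq (hc : HasCompactSupport u) : HasCompactSupport (gradSq u) := by
  refine hc.fderiv (𝕜 := ℝ) |>.mono fun p hp => ?_
  contrapose! hp
  simp_all [gradSq, partialDeriv]

lemma continuous_mul_roundFactor_mul_partialDeriv (hu : ContDiff ℝ 1 u) (i : Fin 2) :
    Continuous fun p => p i * roundFactor p * partialDeriv i u p :=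
  ((by fun_prop : Continuous fun p : ℝ² => p i).mul contDiff_roundFactor.continuous).mul
    (continuous_partialDeriv hu i)

lemma continuous_energyExcess (hu : ContDiff ℝ 1 u) : Continuous (energyExcess u) :=
  ((continuous_gradSq hu).div_const 4).sub (continuous_const.mul
    (continuous_finsetSum _ fun i _ => continuous_mul_roundFactor_mul_partialDeriv hu i))

lemma hasCompactSupport_energyExcess (hc : HasCompactSupport u) :
    HasCompactSupport (energyExcess u) := by
  refine hc.fderiv (𝕜 := ℝ) |>.mono fun p hp => ?_
  contrapose! hp
  simp_all [energyExcess, gradSq, partialDeriv]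

lemma roundFactor_isBigO_one : roundFactor =O[⊤] fun _ => (1 : ℝ) :=
  Asymptotics.IsBigO.of_bound 1 <| .of_forall fun p => by
    simpa [abs_of_pos (roundFactor_pos p)] using roundFactor_le_one p

lemma roundFactor_sq_isBigO : (fun p => roundFactor p ^ 2) =O[⊤] roundFactor := by
  simpa [sq] using roundFactor_isBigO_one.mul (Asymptotics.isBigO_refl roundFactor ⊤)

variable (hu : ContDiff ℝ 1 u) (hc : HasCompactSupport u)
include hu hc

lemma gradSq_logFactor_isBigO : gradSq (logFactor u) =O[⊤] roundFactor := by
  rw [funext (gradSq_logFactor hu)]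
  exact (((Asymptotics.isBigO_refl _ _).sub roundFactor_sq_isBigO).const_mul_left 4).add
    (isBigO_roundFactor_of_hasCompactSupport (continuous_energyExcess hu)
      (hasCompactSupport_energyExcess hc))

lemma partialDeriv_logFactor_sq_isBigO (i : Fin 2) :
    (fun p => partialDeriv i (logFactor u) p ^ 2) =O[⊤] roundFactor := by
  refine Asymptotics.IsBigO.trans (.of_bound 1 <| .of_forall fun p => ?_)
    (gradSq_logFactor_isBigO hu hc)
  have hle : partialDeriv i (logFactor u) p ^ 2 ≤ gradSq (logFactor u) p :=
    Finset.single_le_sum (f := fun i => partialDeriv i (logFactor u) p ^ 2)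
      (fun _ _ => sq_nonneg _) (Finset.mem_univ i)
  rw [one_mul, Real.norm_of_nonneg (sq_nonneg _)]
  exact hle.trans (le_abs_self _)

lemma confFactor_isBigO : confFactor u =O[⊤] roundFactor := by
  obtain ⟨C, hC⟩ := hc.exists_bound_of_continuous hu.continuous
  refine .of_bound (Real.exp (C / 2)) <| .of_forall fun p => ?_
  rw [confFactor_eq, norm_mul, Real.norm_of_nonneg (Real.exp_pos _).le]
  gcongr
  exact (le_abs_self _).trans (hC p)

lemma confFactor_sq_isBigO : (fun p => confFactor u p ^ 2) =O[⊤] roundFactor :=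
  ((confFactor_isBigO hu hc).pow 2).trans roundFactor_sq_isBigO

lemma partialDeriv_confFactor_isBigO (i : Fin 2) :
    partialDeriv i (confFactor u) =O[⊤] roundFactor := by
  have hone : partialDeriv i (logFactor u) =O[⊤] fun _ => (1 : ℝ) := by
    refine .of_pow two_ne_zero ?_
    simpa only [Pi.pow_def, one_pow] using
      (partialDeriv_logFactor_sq_isBigO hu hc i).trans roundFactor_isBigO_one
  rw [funext (partialDeriv_confFactor hu i)]
  simpa using hone.mul (confFactor_isBigO hu hc)

end ConformalFactor

section FibreEnergy

variable {u : ℝ² → ℝ} (hu : ContDiff ℝ 1 u) (hc : HasCompactSupport u)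
include hu hc

lemma memLp_confFactor_pair (x : ℝ) : MemLp (fun y => confFactor u !₂[x, y]) 2 :=
  (memLp_two_iff_integrable_sq
    ((contDiff_confFactor hu).continuous.comp (continuous_pair_right x)).aestronglyMeasurable).2
    (integrable_pair ((contDiff_confFactor hu).continuous.pow 2) (confFactor_sq_isBigO hu hc) x)

lemma memLp_partialDeriv_logFactor_pair (i : Fin 2) (x : ℝ) :
    MemLp (fun y => partialDeriv i (logFactor u) !₂[x, y]) 2 := by
  have hcont := continuous_partialDeriv (contDiff_logFactor hu) i
  exact (memLp_two_iff_integrable_sq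
    (hcont.comp (continuous_pair_right x)).aestronglyMeasurable).2
    (integrable_pair (hcont.pow 2) (partialDeriv_logFactor_sq_isBigO hu hc i) x)

lemma fibreIntegral_gradSq_logFactor_eq (x : ℝ) :
    fibreIntegral (gradSq (logFactor u)) x =
      (∫ y, partialDeriv 0 (logFactor u) !₂[x, y] ^ 2) +
        ∫ y, partialDeriv 1 (logFactor u) !₂[x, y] ^ 2 := by
  simp only [fibreIntegral, gradSq, Fin.sum_univ_two]
  exact integral_add (memLp_partialDeriv_logFactor_pair hu hc 0 x).integrable_sq
    (memLp_partialDeriv_logFactor_pair hu hc 1 x).integrable_sq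

lemma four_pi_sq_mul_fibreIntegral_sq_div_le (x : ℝ) :
    4 * π ^ 2 * fibreIntegral (confFactor u ^ 2) x / fibreIntegral (confFactor u) x ^ 2 ≤
      ∫ y, partialDeriv 1 (logFactor u) !₂[x, y] ^ 2 := by
  have hconf := contDiff_confFactor hu
  have hlim : Tendsto (fun y => partialDeriv 1 (logFactor u) !₂[x, y]) (cocompact ℝ) (𝓝 0) := by
    rw [tendsto_zero_iff_abs_tendsto_zero]
    simpa [Function.comp_def, Real.sqrt_sq_eq_abs] using
      (tendsto_pair_cocompact (partialDeriv_logFactor_sq_isBigO hu hc 1) x).sqrt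
  rw [div_le_iff₀' (pow_pos
    (fibreIntegral_pos hconf.continuous (confFactor_isBigO hu hc) confFactor_pos x) 2)]
  refine four_pi_sq_mul_integral_sq_le (fun y => confFactor_pos _) (fun y => ?_)
    (integrable_pair hconf.continuous (confFactor_isBigO hu hc) x)
    (memLp_confFactor_pair hu hc x) (memLp_partialDeriv_logFactor_pair hu hc 1 x)
    (hlim.mono_left atBot_le_cocompact) (hlim.mono_left atTop_le_cocompact)
  rw [mul_comm, ← partialDeriv_confFactor hu]
  exact hasDerivAt_pair_right (hconf.differentiable one_ne_zero) x y

lemma two_mul_fibreIntegral_partialDeriv_sub_le (x k : ℝ) :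
    2 * k * fibreIntegral (partialDeriv 0 (confFactor u)) x -
      k ^ 2 * fibreIntegral (confFactor u ^ 2) x ≤
      ∫ y, partialDeriv 0 (logFactor u) !₂[x, y] ^ 2 := by
  rw [funext (partialDeriv_confFactor hu 0)]
  exact two_mul_integral_mul_sub_le (memLp_partialDeriv_logFactor_pair hu hc 0 x)
    (memLp_confFactor_pair hu hc x) k

lemma le_fibreIntegral_gradSq_logFactor (x k : ℝ) :
    4 * π ^ 2 * fibreIntegral (confFactor u ^ 2) x / fibreIntegral (confFactor u) x ^ 2 +
      (2 * k * fibreIntegral (partialDeriv 0 (confFactor u)) x -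
        k ^ 2 * fibreIntegral (confFactor u ^ 2) x) ≤
      fibreIntegral (gradSq (logFactor u)) x := by
  rw [fibreIntegral_gradSq_logFactor_eq hu hc, add_comm (∫ y, _)]
  exact add_le_add (four_pi_sq_mul_fibreIntegral_sq_div_le hu hc x)
    (two_mul_fibreIntegral_partialDeriv_sub_le hu hc x k)

end FibreEnergy

section OutsideSupport

variable {u : ℝ² → ℝ} {x : ℝ}

lemma exists_forall_pair_eq_zero (hc : HasCompactSupport u) :
    ∃ r, ∀ x, r ≤ |x| → ∀ y, u !₂[x, y] = 0 := by
  obtain ⟨r, hr⟩ := hc.isCompact.isBounded.subset_ball 0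
  refine ⟨r, fun x hx y => image_eq_zero_of_notMem_tsupport fun hmem => ?_⟩
  have hnorm : ‖(!₂[x, y] : ℝ²)‖ < r := by simpa using hr hmem
  exact absurd (hx.trans (PiLp.norm_apply_le (!₂[x, y] : ℝ²) 0)) hnorm.not_ge

lemma fibreIntegral_roundFactor (x : ℝ) : fibreIntegral roundFactor x = π / √(1 + x ^ 2) := by
  simp only [fibreIntegral, roundFactor_pair]
  exact integral_inv_sq_add_sq (by positivity)

lemma fibreIntegral_roundFactor_sq (x : ℝ) :
    fibreIntegral (roundFactor ^ 2) x = π / (2 * √(1 + x ^ 2) ^ 3) := by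
  simp only [fibreIntegral, Pi.pow_apply, roundFactor_pair, inv_pow]
  exact integral_inv_sq_add_sq_sq (by positivity)

lemma confFactor_pair_of_eq_zero (hx : ∀ y, u !₂[x, y] = 0) (y : ℝ) :
    confFactor u !₂[x, y] = roundFactor !₂[x, y] := by
  simp [confFactor_eq, hx]

lemma fibreIntegral_confFactor_of_eq_zero (hx : ∀ y, u !₂[x, y] = 0) :
    fibreIntegral (confFactor u) x = π / √(1 + x ^ 2) := by
  rw [← fibreIntegral_roundFactor, fibreIntegral, funext (confFactor_pair_of_eq_zero hx)]
  rfl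

lemma fibreIntegral_confFactor_sq_of_eq_zero (hx : ∀ y, u !₂[x, y] = 0) :
    fibreIntegral (confFactor u ^ 2) x = π / (2 * √(1 + x ^ 2) ^ 3) := by
  simp only [← fibreIntegral_roundFactor_sq, fibreIntegral, Pi.pow_apply,
    confFactor_pair_of_eq_zero hx]

lemma fibreIntegral_gradSq_logFactor (hu : ContDiff ℝ 1 u) (hc : HasCompactSupport u) (x : ℝ) :
    fibreIntegral (gradSq (logFactor u)) x =
      4 * π / √(1 + x ^ 2) - 2 * π / √(1 + x ^ 2) ^ 3 + fibreIntegral (energyExcess u) x := by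
  have hround := contDiff_roundFactor.continuous
  have hint := integrable_pair hround (Asymptotics.isBigO_refl _ _) x
  have hint_sq : Integrable fun y => roundFactor !₂[x, y] ^ 2 :=
    integrable_pair (hround.pow 2) roundFactor_sq_isBigO x
  have hsub : Integrable fun y => roundFactor !₂[x, y] - roundFactor !₂[x, y] ^ 2 :=
    hint.sub hint_sq
  have hexcess := integrable_pair (continuous_energyExcess hu)
    (isBigO_roundFactor_of_hasCompactSupport (continuous_energyExcess hu)
      (hasCompactSupport_energyExcess hc)) x
  have hone := fibreIntegral_roundFactor x
  have htwo := fibreIntegral_roundFactor_sq x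
  simp only [fibreIntegral, gradSq_logFactor hu, Pi.pow_apply] at hone htwo ⊢
  rw [integral_add (hsub.const_mul 4) hexcess, integral_const_mul,
    integral_sub hint hint_sq, hone, htwo]
  ring

end OutsideSupport

section Area

lemma integral_sphMeasure (g : ℝ² → ℝ) :
    ∫ p, g p ∂sphMeasure = π⁻¹ * ∫ p, roundFactor p ^ 2 * g p := by
  rw [sphMeasure, integral_withDensity_eq_integral_toReal_smul (by fun_prop)
    (ae_of_all _ fun _ => ENNReal.ofReal_lt_top), ← integral_const_mul]
  congr 1 with p
  rw [ENNReal.toReal_ofReal (by positivity), smul_eq_mul, mul_assoc, roundFactor, inv_pow]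

/-- The area of the plane for the metric with conformal factor `confFactor u`. -/
noncomputable def totalArea (u : ℝ² → ℝ) : ℝ := ∫ p, confFactor u p ^ 2

/-- The area of the half-plane `{p | p 0 ≤ x}` for the metric with conformal factor
`confFactor u`. -/
noncomputable def leftArea (u : ℝ² → ℝ) (x : ℝ) : ℝ :=
  ∫ s in Iic x, fibreIntegral (confFactor u ^ 2) s

variable {u : ℝ² → ℝ}

lemma totalArea_eq : totalArea u = π * ∫ p, Real.exp (u p) ∂sphMeasure := by
  rw [totalArea, integral_sphMeasure, mul_inv_cancel_left₀ Real.pi_ne_zero]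
  congr 1 with p
  rw [confFactor_eq, mul_pow, ← Real.exp_nat_mul, mul_comm, Nat.cast_two,
    mul_div_cancel₀ _ two_ne_zero]

lemma leftArea_neg_of_eq_zero {R : ℝ} (hR : ∀ x ≤ -R, ∀ y, u !₂[x, y] = 0) :
    leftArea u (-R) = capArea R := by
  have hreflect := integral_comp_neg_Iic (-R) fun x => π / (2 * √(1 + x ^ 2) ^ 3)
  rw [neg_neg, integral_Ioi_fibreArea_round] at hreflect
  rw [← hreflect]
  refine setIntegral_congr_fun measurableSet_Iic fun x hx => ?_
  simpa using fibreIntegral_confFactor_sq_of_eq_zero (hR x hx)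

variable (hu : ContDiff ℝ 1 u) (hc : HasCompactSupport u)
include hu hc

lemma integrable_confFactor_sq : Integrable (confFactor u ^ 2) := by
  have hround : Integrable fun p => roundFactor p ^ 2 := by
    refine (integrable_rpow_neg_one_add_norm_sq (E := ℝ²) (r := 4) (by norm_num)).congr
      (.of_forall fun p => ?_)
    norm_num [roundFactor, Real.rpow_neg (by positivity : 0 ≤ 1 + ‖p‖ ^ 2)]
  exact ((confFactor_isBigO hu hc).pow 2 |>.mono le_top).integrable
    ((contDiff_confFactor hu).continuous.pow 2).aestronglyMeasurable hround

lemma integrable_fibreIntegral_confFactor_sq : Integrable (fibreIntegral (confFactor u ^ 2)) :=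
  integrable_fibreIntegral (integrable_confFactor_sq hu hc)

lemma integral_fibreIntegral_confFactor_sq :
    ∫ x, fibreIntegral (confFactor u ^ 2) x = totalArea u :=
  integral_fibreIntegral (integrable_confFactor_sq hu hc)

lemma fibreIntegral_confFactor_sq_pos (x : ℝ) : 0 < fibreIntegral (confFactor u ^ 2) x :=
  fibreIntegral_pos ((contDiff_confFactor hu).continuous.pow 2) (confFactor_sq_isBigO hu hc)
    (fun p => pow_pos (confFactor_pos p) 2) x

lemma leftArea_mem_Ioo (x : ℝ) : leftArea u x ∈ Ioo 0 (totalArea u) := by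
  rw [← integral_fibreIntegral_confFactor_sq hu hc]
  exact integral_Iic_mem_Ioo (integrable_fibreIntegral_confFactor_sq hu hc)
    (fibreIntegral_confFactor_sq_pos hu hc) x

lemma totalArea_pos : 0 < totalArea u :=
  (leftArea_mem_Ioo hu hc 0).1.trans (leftArea_mem_Ioo hu hc 0).2

lemma hasDerivAt_leftArea (x : ℝ) :
    HasDerivAt (leftArea u) (fibreIntegral (confFactor u ^ 2) x) x :=
  hasDerivAt_integral_Iic (integrable_fibreIntegral_confFactor_sq hu hc)
    (continuous_fibreIntegral ((contDiff_confFactor hu).continuous.pow 2)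
      (confFactor_sq_isBigO hu hc)) x

lemma leftArea_of_eq_zero {R : ℝ} (hR : ∀ x > R, ∀ y, u !₂[x, y] = 0) :
    leftArea u R = totalArea u - capArea R := by
  have hright : ∫ x in Ioi R, fibreIntegral (confFactor u ^ 2) x = capArea R := by
    rw [← integral_Ioi_fibreArea_round]
    exact setIntegral_congr_fun measurableSet_Ioi fun x hx =>
      fibreIntegral_confFactor_sq_of_eq_zero (hR x hx)
  rw [eq_sub_iff_add_eq, ← hright, ← integral_fibreIntegral_confFactor_sq hu hc]
  have hint := integrable_fibreIntegral_confFactor_sq hu hc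
  exact intervalIntegral.integral_Iic_add_Ioi hint.integrableOn hint.integrableOn

end Area

section EnergyExcess

lemma partialDeriv_mul_roundFactor (i : Fin 2) (p : ℝ²) :
    partialDeriv i (fun p => p i * roundFactor p) p =
      roundFactor p - 2 * p i ^ 2 * roundFactor p ^ 2 := by
  have hinv : HasFDerivAt roundFactor _ p :=
    (hasDerivAt_inv (by positivity)).comp_hasFDerivAt p (hasFDerivAt_one_add_norm_sq p)
  have hmul : HasFDerivAt (fun p : ℝ² => p i * roundFactor p) _ p :=
    (EuclideanSpace.proj (𝕜 := ℝ) i).hasFDerivAt.mul hinv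
  rw [partialDeriv, hmul.fderiv]
  simp only [PiLp.proj_apply, PiLp.single_eq_same, roundFactor, add_apply, smul_apply,
    coe_innerSL_apply, EuclideanSpace.inner_single_right, Real.ringHom_apply, nsmul_eq_mul,
    Nat.cast_ofNat, smul_eq_mul, one_mul, mul_one, inv_pow]
  ring

variable {u : ℝ² → ℝ} (hu : ContDiff ℝ 1 u) (hc : HasCompactSupport u)
include hu hc

lemma integral_mul_roundFactor_mul_partialDeriv (i : Fin 2) :
    ∫ p, p i * roundFactor p * partialDeriv i u p =
      -∫ p, (roundFactor p - 2 * p i ^ 2 * roundFactor p ^ 2) * u p := by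
  have hsmooth : ContDiff ℝ 1 fun p : ℝ² => p i * roundFactor p :=
    (by fun_prop : ContDiff ℝ 1 fun p : ℝ² => p i).mul contDiff_roundFactor
  simp only [← partialDeriv_mul_roundFactor]
  exact integral_mul_fderiv_eq_neg_fderiv_mul_of_integrable
    (((continuous_partialDeriv hsmooth i).mul hu.continuous).integrable_of_hasCompactSupport
      hc.mul_left)
    ((continuous_mul_roundFactor_mul_partialDeriv hu i).integrable_of_hasCompactSupport
      (hasCompactSupport_partialDeriv hc i).mul_left)
    ((hsmooth.continuous.mul hu.continuous).integrable_of_hasCompactSupport hc.mul_left)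
    (fun p _ => hsmooth.differentiable one_ne_zero p) fun p _ => hu.differentiable one_ne_zero p

lemma sum_integral_mul_roundFactor_mul_partialDeriv :
    ∑ i, ∫ p, p i * roundFactor p * partialDeriv i u p = -(2 * ∫ p, roundFactor p ^ 2 * u p) := by
  have hround := contDiff_roundFactor.continuous
  have hint (i : Fin 2) :
      Integrable fun p => (roundFactor p - 2 * p i ^ 2 * roundFactor p ^ 2) * u p :=
    Continuous.integrable_of_hasCompactSupport
      (by have := hu.continuous; fun_prop) hc.mul_left
  rw [Finset.sum_congr rfl fun i _ => integral_mul_roundFactor_mul_partialDeriv hu hc i,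
    Finset.sum_neg_distrib, ← integral_finsetSum _ fun i _ => hint i, ← integral_const_mul]
  congr 2 with p
  rw [Fin.sum_univ_two]
  linear_combination -2 * roundFactor p * u p * norm_sq_mul_roundFactor p

lemma integral_energyExcess :
    ∫ p, energyExcess u p = (∫ p, gradSq u p) / 4 + 4 * π * ∫ p, u p ∂sphMeasure := by
  have hgrad : Integrable (gradSq u) :=
    (continuous_gradSq hu).integrable_of_hasCompactSupport (hasCompactSupport_gradSq hc)
  have hmul (i : Fin 2) : Integrable fun p => p i * roundFactor p * partialDeriv i u p :=
    (continuous_mul_roundFactor_mul_partialDeriv hu i).integrable_of_hasCompactSupport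
      (hasCompactSupport_partialDeriv hc i).mul_left
  simp only [energyExcess]
  rw [integral_sub (hgrad.div_const 4)
      ((integrable_finsetSum _ fun i _ => hmul i).const_mul 2), integral_div,
    integral_const_mul, integral_finsetSum _ fun i _ => hmul i,
    sum_integral_mul_roundFactor_mul_partialDeriv hu hc, integral_sphMeasure]
  field_simp
  ring

end EnergyExcess

section Comparison

variable {u : ℝ² → ℝ} (hu : ContDiff ℝ 1 u) (hc : HasCompactSupport u)
include hu hc

lemma calibration_leftArea_sub_le_integral {x₀ x₁ : ℝ} (hle : x₀ ≤ x₁) :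
    calibration (totalArea u) (leftArea u x₁) (fibreIntegral (confFactor u) x₁) -
      calibration (totalArea u) (leftArea u x₀) (fibreIntegral (confFactor u) x₀) ≤
      ∫ x in x₀..x₁, fibreIntegral (gradSq (logFactor u)) x :=
  calibration_sub_le_integral (leftArea_mem_Ioo hu hc) (hasDerivAt_leftArea hu hc)
    (fun x => (fibreIntegral_confFactor_sq_pos hu hc x).le)
    (hasDerivAt_fibreIntegral (contDiff_confFactor hu) (confFactor_isBigO hu hc)
      (partialDeriv_confFactor_isBigO hu hc 0))
    (fibreIntegral_pos (contDiff_confFactor hu).continuous (confFactor_isBigO hu hc)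
      confFactor_pos)
    (le_fibreIntegral_gradSq_logFactor hu hc) hle
    (continuous_fibreIntegral (continuous_gradSq (contDiff_logFactor hu))
      (gradSq_logFactor_isBigO hu hc)).integrableOn_Icc

lemma integral_fibreIntegral_gradSq_logFactor (R : ℝ) :
    ∫ x in (-R)..R, fibreIntegral (gradSq (logFactor u)) x =
      8 * π * Real.arsinh R - 4 * π * (R / √(1 + R ^ 2)) +
        ∫ x in (-R)..R, fibreIntegral (energyExcess u) x := by
  have hexcess := continuous_fibreIntegral (continuous_energyExcess hu)
    (isBigO_roundFactor_of_hasCompactSupport (continuous_energyExcess hu)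
      (hasCompactSupport_energyExcess hc))
  simp only [fibreIntegral_gradSq_logFactor hu hc]
  rw [intervalIntegral.integral_add _ (hexcess.intervalIntegrable _ _),
    integral_fibreEnergy_round]
  exact Continuous.intervalIntegrable (by fun_prop (disch := intros; positivity)) _ _

lemma calibration_round_sub_le {R : ℝ} (hR₀ : 0 ≤ R) (hR : ∀ x, R ≤ |x| → ∀ y, u !₂[x, y] = 0) :
    calibration (totalArea u) (totalArea u - capArea R) (π / √(1 + R ^ 2)) -
      calibration (totalArea u) (capArea R) (π / √(1 + R ^ 2)) -
      (8 * π * Real.arsinh R - 4 * π * (R / √(1 + R ^ 2))) ≤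
      ∫ x in (-R)..R, fibreIntegral (energyExcess u) x := by
  have hcal := calibration_leftArea_sub_le_integral hu hc (neg_le_self hR₀)
  rw [integral_fibreIntegral_gradSq_logFactor hu hc,
    leftArea_of_eq_zero hu hc fun x hx => hR x (hx.le.trans (le_abs_self x)),
    leftArea_neg_of_eq_zero fun x hx => hR x (le_abs.2 (.inr (le_neg_of_le_neg hx))),
    fibreIntegral_confFactor_of_eq_zero (hR R (le_abs_self R)),
    fibreIntegral_confFactor_of_eq_zero (hR (-R) ((le_abs_self R).trans_eq (abs_neg R).symm)),
    neg_sq] at hcal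
  exact sub_le_iff_le_add'.2 hcal

lemma four_pi_mul_log_sub_log_le_integral_energyExcess :
    4 * π * (Real.log (totalArea u) - Real.log π) ≤ ∫ p, energyExcess u p := by
  have hexcess : Integrable (energyExcess u) :=
    (continuous_energyExcess hu).integrable_of_hasCompactSupport (hasCompactSupport_energyExcess hc)
  obtain ⟨r, hr⟩ := exists_forall_pair_eq_zero hc
  rw [← integral_fibreIntegral hexcess]
  refine le_of_tendsto_of_tendsto
    (tendsto_calibration_sub_fibreEnergy_round (totalArea_pos hu hc))
    (intervalIntegral_tendsto_integral (integrable_fibreIntegral hexcess)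
      tendsto_neg_atTop_atBot tendsto_id) ?_
  filter_upwards [eventually_ge_atTop 0, eventually_ge_atTop r] with R hR₀ hR
  exact calibration_round_sub_le hu hc hR₀ fun x hx => hr x (hR.trans hx)

end Comparison

end MoserOnofri

open MoserOnofri in
theorem moser_onofri_general
    (u : EuclideanSpace ℝ (Fin 2) → ℝ)
    (hu : ContDiff ℝ 1 u) (hc : HasCompactSupport u) :
    Real.log (∫ x, Real.exp (u x) ∂sphMeasure)
      ≤ (∫ x, u x ∂sphMeasure)
        + (1 / (16 * π))
            * ∫ x, ∑ i, (fderiv ℝ u x (EuclideanSpace.single i 1)) ^ 2 := by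
  have hpos : 0 < π * ∫ p, Real.exp (u p) ∂sphMeasure := totalArea_eq ▸ totalArea_pos hu hc
  have hle := four_pi_mul_log_sub_log_le_integral_energyExcess hu hc
  rw [totalArea_eq, Real.log_mul Real.pi_ne_zero (pos_of_mul_pos_right hpos Real.pi_nonneg).ne',
    add_sub_cancel_left, integral_energyExcess hu hc] at hle
  refine le_of_mul_le_mul_left (hle.trans_eq ?_) (by positivity : 0 < 4 * π)
  simp only [gradSq, partialDeriv]
  field_simp
  ring

/-- The Moser–Onofri inequality on `ℝ²` (the Euclidean form of Beckner's sharp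
inequality in the critical case `n = 2k = 2`):
`log ∫ e^u dμ ≤ ∫ u dμ + (1/(16π)) ∫ |∇u|² dx`. -/
theorem moser_onofri
    (u : EuclideanSpace ℝ (Fin 2) → ℝ)
    (hu : ContDiff ℝ (⊤ : ℕ∞) u) (hc : HasCompactSupport u) :
    Real.log (∫ x, Real.exp (u x) ∂sphMeasure)
      ≤ (∫ x, u x ∂sphMeasure)
        + (1 / (16 * π))
            * ∫ x, ∑ i, (fderiv ℝ u x (EuclideanSpace.single i 1)) ^ 2 :=
  moser_onofri_general u (hu.of_le (by exact_mod_cast le_top)) hc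
end
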